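/- arXiv:math/9207210 — 2 statements merged into one kernel-verified Lean document; each statement's English description precedes it below -/
import Mathlib

section
/- Let k be an algebraically closed field of odd characteristic p, let a be a nonzero element of k, and let n, s, t be positive integers with gcd(n,t) = 1, p dividing n, t dividing s, and 1 < t < n - 3. Then the polynomial f = Y^n - a·Y^t + X^s over the rational function field k(X) has n distinct roots in a splitting field, and the image of its Galois group in the group of permutations of this set of roots is exactly the alternating group on those n roots. -/
open Polynomial

open scoped Classical





namespace Abh
open Equiv

/-- pointwise fixer -/
noncomputable def FS {Ω : Type*} (G : Subgroup (Perm Ω)) (s : Finset Ω) : Subgroup (Perm Ω) where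
  carrier := {g | g ∈ G ∧ ∀ z ∈ s, g z = z}
  mul_mem' := by
    rintro a b ⟨ha, ha'⟩ ⟨hb, hb'⟩
    refine ⟨G.mul_mem ha hb, fun z hz => ?_⟩
    rw [Perm.mul_apply, hb' z hz, ha' z hz]
  one_mem' := ⟨G.one_mem, fun _ _ => rfl⟩
  inv_mem' := by
    rintro a ⟨ha, ha'⟩
    refine ⟨G.inv_mem ha, fun z hz => ?_⟩
    rw [Perm.inv_eq_iff_eq, ha' z hz]

theorem mem_FS {Ω : Type*} {G : Subgroup (Perm Ω)} {s : Finset Ω} {g : Perm Ω} :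
    g ∈ FS G s ↔ g ∈ G ∧ ∀ z ∈ s, g z = z := Iff.rfl

/-- orbit of the fixer -/
noncomputable def orb {Ω : Type*} [Fintype Ω] (G : Subgroup (Perm Ω)) (s : Finset Ω) (y : Ω) :
    Finset Ω := Finset.univ.filter (fun z => ∃ g ∈ FS G s, g y = z)

theorem mem_orb {Ω : Type*} [Fintype Ω] {G : Subgroup (Perm Ω)} {s : Finset Ω} {y z : Ω} :
    z ∈ orb G s y ↔ ∃ g ∈ FS G s, g y = z := by simp [orb]

theorem orb_eq_of_mem {Ω : Type*} [Fintype Ω] {G : Subgroup (Perm Ω)} {s : Finset Ω} {y z : Ω}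
    (h : z ∈ orb G s y) : orb G s z = orb G s y := by
  obtain ⟨g, hg, rfl⟩ := mem_orb.1 h
  ext w
  rw [mem_orb, mem_orb]
  constructor
  · rintro ⟨h, hh, rfl⟩
    exact ⟨h * g, mul_mem hh hg, rfl⟩
  · rintro ⟨h, hh, rfl⟩
    exact ⟨h * g⁻¹, mul_mem hh (inv_mem hg), by simp⟩

theorem orb_card {Ω : Type*} [Fintype Ω] (G : Subgroup (Perm Ω)) (s : Finset Ω) (y : Ω) :
    (orb G s y).card * Nat.card (FS G (insert y s)) = Nat.card (FS G s) := by
  have h1 := MulAction.card_orbit_mul_card_stabilizer_eq_card_group (FS G s) y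
  have h2 : Nat.card (MulAction.stabilizer (FS G s) y) = Nat.card (FS G (insert y s)) := by
    have hle : FS G (insert y s) ≤ FS G s := fun g hg =>
      ⟨hg.1, fun z hz => hg.2 z (Finset.mem_insert_of_mem hz)⟩
    have : MulAction.stabilizer (FS G s) y = (FS G (insert y s)).subgroupOf (FS G s) := by
      ext g
      rw [MulAction.mem_stabilizer_iff, Subgroup.mem_subgroupOf, mem_FS]
      constructor
      · intro hg
        refine ⟨g.2.1, fun z hz => ?_⟩
        rcases Finset.mem_insert.1 hz with rfl | hz
        · exact hg
        · exact g.2.2 z hz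
      · intro hg
        exact hg.2 y (Finset.mem_insert_self _ _)
    rw [this]
    exact Nat.card_congr (Subgroup.subgroupOfEquivOfLe hle).toEquiv
  have h3 : Nat.card (MulAction.orbit (FS G s) y) = (orb G s y).card := by
    have : MulAction.orbit (FS G s) y = ((orb G s y : Finset Ω) : Set Ω) := by
      ext z
      rw [Finset.mem_coe, mem_orb, MulAction.mem_orbit_iff]
      constructor
      · rintro ⟨g, hg⟩
        exact ⟨g, g.2, hg⟩
      · rintro ⟨g, hg, hh⟩
        exact ⟨⟨g, hg⟩, hh⟩
    rw [this]; simp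
  rw [← h2, ← h3]
  simpa [Nat.card_eq_fintype_card] using h1

theorem FS_conj {Ω : Type*} {G : Subgroup (Perm Ω)} {s : Finset Ω} {g h : Perm Ω}
    (hg : g ∈ G) (hh : h ∈ FS G s) : g * h * g⁻¹ ∈ FS G (s.image g) := by
  refine ⟨mul_mem (mul_mem hg hh.1) (inv_mem hg), fun z hz => ?_⟩
  obtain ⟨w, hw, rfl⟩ := Finset.mem_image.1 hz
  simp [hh.2 w hw]

theorem orb_conj {Ω : Type*} [Fintype Ω] {G : Subgroup (Perm Ω)} {s : Finset Ω} {g : Perm Ω}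
    (hg : g ∈ G) (y : Ω) : orb G (s.image g) (g y) = (orb G s y).image g := by
  ext z
  rw [mem_orb, Finset.mem_image]
  constructor
  · rintro ⟨h, hh, rfl⟩
    refine ⟨g⁻¹ (h (g y)), mem_orb.2 ⟨g⁻¹ * h * g, ?_, rfl⟩, by simp⟩
    have := FS_conj (inv_mem hg) hh
    rw [Finset.image_image] at this
    simpa [Function.comp_def] using this
  · rintro ⟨w, hw, rfl⟩
    obtain ⟨h, hh, rfl⟩ := mem_orb.1 hw
    exact ⟨g * h * g⁻¹, FS_conj hg hh, by simp⟩

/-- bad pairs -/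
def bad {Ω : Type*} [Fintype Ω] (G : Subgroup (Perm Ω)) (N : ℕ) (s : Finset Ω) (x y : Ω) : Prop :=
  x ∉ s ∧ y ∉ s ∧ (orb G (insert x s) y).card < N

theorem bad_conj {Ω : Type*} [Fintype Ω] {G : Subgroup (Perm Ω)} {N : ℕ} {s : Finset Ω}
    {g : Perm Ω} (hg : g ∈ G) {x y : Ω} (h : bad G N s x y) : bad G N (s.image g) (g x) (g y) := by
  refine ⟨by simpa using h.1, by simpa using h.2.1, ?_⟩
  rw [← Finset.image_insert, orb_conj hg, Finset.card_image_of_injective _ g.injective]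
  exact h.2.2

/-- component -/
noncomputable def comp {Ω : Type*} [Fintype Ω] (G : Subgroup (Perm Ω)) (N : ℕ) (s : Finset Ω)
    (x : Ω) : Finset Ω := Finset.univ.filter (fun y => Relation.EqvGen (bad G N s) x y)

theorem mem_comp {Ω : Type*} [Fintype Ω] {G : Subgroup (Perm Ω)} {N : ℕ} {s : Finset Ω}
    {x y : Ω} : y ∈ comp G N s x ↔ Relation.EqvGen (bad G N s) x y := by simp [comp]

theorem eqv_conj {Ω : Type*} [Fintype Ω] {G : Subgroup (Perm Ω)} {N : ℕ} {s : Finset Ω}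
    {g : Perm Ω} (hg : g ∈ G) {x y : Ω} (h : Relation.EqvGen (bad G N s) x y) :
    Relation.EqvGen (bad G N (s.image g)) (g x) (g y) := by
  induction h with
  | rel x y h => exact .rel _ _ (bad_conj hg h)
  | refl x => exact .refl _
  | symm x y _ ih => exact .symm _ _ ih
  | trans x y z _ _ h1 h2 => exact .trans _ _ _ h1 h2

theorem comp_conj {Ω : Type*} [Fintype Ω] {G : Subgroup (Perm Ω)} {N : ℕ} {s : Finset Ω}
    {g : Perm Ω} (hg : g ∈ G) (x : Ω) :
    (comp G N (s.image g) (g x)).card = (comp G N s x).card := by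
  have : comp G N (s.image g) (g x) = (comp G N s x).image g := by
    ext z
    rw [mem_comp, Finset.mem_image]
    constructor
    · intro h
      have := eqv_conj (inv_mem hg) h
      rw [Finset.image_image] at this
      refine ⟨g⁻¹ z, mem_comp.2 ?_, by simp⟩
      simpa [Function.comp_def] using this
    · rintro ⟨w, hw, rfl⟩
      exact eqv_conj hg (mem_comp.1 hw)
  rw [this, Finset.card_image_of_injective _ g.injective]

theorem dvd_of_closed {Ω : Type*} [Fintype Ω] {G : Subgroup (Perm Ω)} {N : ℕ} {s : Finset Ω}
    (A : Finset Ω) (b : ℕ) (hb : ∀ x ∈ A, (comp G N s x).card = b)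
    (hcl : ∀ x y, bad G N s x y → (x ∈ A ↔ y ∈ A)) : b ∣ A.card := by
  have hcl' : ∀ x y, Relation.EqvGen (bad G N s) x y → (x ∈ A ↔ y ∈ A) := by
    intro x y h
    induction h with
    | rel x y h => exact hcl _ _ h
    | refl x => exact Iff.rfl
    | symm x y _ ih => exact ih.symm
    | trans x y z _ _ h1 h2 => exact h1.trans h2
  have hself : ∀ x, x ∈ comp G N s x := fun x => mem_comp.2 (.refl _)
  have heq : ∀ x y, y ∈ comp G N s x → comp G N s y = comp G N s x := by
    intro x y h
    rw [mem_comp] at h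
    ext z
    rw [mem_comp, mem_comp]
    exact ⟨fun h' => .trans _ _ _ h h', fun h' => .trans _ _ _ (.symm _ _ h) h'⟩
  rw [Finset.card_eq_sum_card_image (comp G N s) A]
  apply Finset.dvd_sum
  intro c hc
  obtain ⟨x, hx, rfl⟩ := Finset.mem_image.1 hc
  have : A.filter (fun a => comp G N s a = comp G N s x) = comp G N s x := by
    ext y
    rw [Finset.mem_filter]
    constructor
    · rintro ⟨_, h⟩
      rw [← h]; exact hself y
    · intro h
      exact ⟨(hcl' x y (mem_comp.1 h)).1 hx, heq x y h⟩
  rw [this, hb x hx]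

/-- homogeneity -/
def UU {Ω : Type*} (G : Subgroup (Perm Ω)) (j : ℕ) : Prop :=
  ∀ s s₂ : Finset Ω, s.card = j → s₂.card = j → ∃ g ∈ G, s.image g = s₂

/-- transitivity of fixers -/
def TT {Ω : Type*} (G : Subgroup (Perm Ω)) (j : ℕ) : Prop :=
  ∀ s : Finset Ω, s.card = j → ∀ x y, x ∉ s → y ∉ s → ∃ g ∈ FS G s, g x = y

theorem UT {Ω : Type*} {G : Subgroup (Perm Ω)} {j : ℕ} (hU : UU G j) (hT : TT G j)
    {s s' : Finset Ω} (hs : s.card = j) (hs' : s'.card = j) {x x' : Ω} (hx : x ∉ s) (hx' : x' ∉ s') :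
    ∃ g ∈ G, s.image g = s' ∧ g x = x' := by
  obtain ⟨g, hg, rfl⟩ := hU s s' hs hs'
  obtain ⟨h, hh, rfl⟩ := hT _ hs' (g x) x' (by simpa using hx) hx'
  refine ⟨h * g, mul_mem hh.1 hg, ?_, rfl⟩
  ext z
  simp only [Finset.mem_image, Perm.mul_apply]
  constructor
  · rintro ⟨a, ha, rfl⟩
    exact ⟨a, ha, (hh.2 _ (Finset.mem_image_of_mem _ ha)).symm⟩
  · rintro ⟨a, ha, rfl⟩
    exact ⟨a, ha, (hh.2 _ (Finset.mem_image_of_mem _ ha))⟩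

theorem step {Ω : Type*} [Fintype Ω] (G : Subgroup (Perm Ω)) (A : Finset Ω)
    (hlt : A.card < Aᶜ.card) (hco : Nat.Coprime A.card Aᶜ.card)
    (hα : ∀ x ∈ A, ∀ y ∈ A, ∃ g ∈ G, (∀ z ∉ A, g z = z) ∧ g x = y)
    (hβ : ∀ x ∉ A, ∀ y ∉ A, ∃ g ∈ G, (∀ z ∈ A, g z = z) ∧ g x = y)
    (j : ℕ) (hj : j < A.card) (hU : UU G j) (hT : TT G j) : UU G (j+1) ∧ TT G (j+1) := by
  constructor
  · intro s s' hs hs'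
    obtain ⟨x, t, hx, rfl, ht⟩ := Finset.card_eq_succ.1 hs
    obtain ⟨x', t', hx', rfl, ht'⟩ := Finset.card_eq_succ.1 hs'
    obtain ⟨g, hg, h1, h2⟩ := UT hU hT ht ht' hx hx'
    exact ⟨g, hg, by rw [Finset.image_insert, h1, h2]⟩
  set N := Aᶜ.card with hN
  have hsum : A.card + N = Fintype.card Ω := Finset.card_add_card_compl A
  -- symmetry
  have hpos : ∀ s, 0 < Nat.card (FS G s) := fun s => Nat.card_pos
  have horbfull : ∀ s : Finset Ω, s.card = j → ∀ x ∉ s, orb G s x = sᶜ := by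
    intro s hs x hx
    ext y
    rw [mem_orb, Finset.mem_compl]
    constructor
    · rintro ⟨g, hg, rfl⟩ hy
      apply hx
      have := hg.2 _ hy
      rw [← g.injective this]; exact hy
    · intro hy
      exact hT s hs x y hx hy
  have hsym0 : ∀ s : Finset Ω, s.card = j → ∀ x y, x ∉ s → y ∉ s →
      (orb G (insert x s) y).card = (orb G (insert y s) x).card := by
    intro s hs x y hx hy
    have h1 := orb_card G s x
    have h2 := orb_card G (insert x s) y
    have h3 := orb_card G s y
    have h4 := orb_card G (insert y s) x
    rw [horbfull s hs x hx] at h1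
    rw [horbfull s hs y hy] at h3
    have hc : 0 < (sᶜ).card := Finset.card_pos.2 ⟨x, by simpa using hx⟩
    have h5 : Nat.card (FS G (insert x s)) = Nat.card (FS G (insert y s)) :=
      Nat.eq_of_mul_eq_mul_left hc (h1.trans h3.symm)
    rw [Finset.insert_comm x y] at h4
    rw [h5, ← h4] at h2
    exact Nat.eq_of_mul_eq_mul_right (hpos _) h2
  have hsym : ∀ s : Finset Ω, s.card = j → ∀ x y, bad G N s x y → bad G N s y x := by
    intro s hs x y h
    exact ⟨h.2.1, h.1, by rw [← hsym0 s hs x y h.1 h.2.1]; exact h.2.2⟩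
  -- choose sets
  obtain ⟨sA, hsA, hsAc⟩ := Finset.exists_subset_card_eq hj.le
  obtain ⟨sB, hsB, hsBc⟩ := Finset.exists_subset_card_eq (hj.le.trans hlt.le : j ≤ N)
  have hA1 : ∀ z ∈ A, z ∉ sA → ∀ y ∉ A, Aᶜ ⊆ orb G (insert z sA) y := by
    intro z hz hzs y hy w hw
    obtain ⟨g, hg, hg1, hg2⟩ := hβ y hy w (by simpa using hw)
    refine mem_orb.2 ⟨g, ⟨hg, fun v hv => hg1 v ?_⟩, hg2⟩
    rcases Finset.mem_insert.1 hv with rfl | hv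
    · exact hz
    · exact hsA hv
  have hAgood : ∀ z ∈ A, z ∉ sA → ∀ y ∉ A, ¬ bad G N sA z y := by
    intro z hz hzs y hy hb
    have := Finset.card_le_card (hA1 z hz hzs y hy)
    exact absurd hb.2.2 (by omega)
  obtain ⟨zA, hzA, hzAs⟩ : ∃ z ∈ A, z ∉ sA := by
    by_contra! hcon
    have := Finset.card_le_card (show A ⊆ sA from hcon)
    omega
  obtain ⟨yB, hyB⟩ : ∃ y, y ∉ A := by
    have : 0 < Aᶜ.card := by omega
    obtain ⟨y, hy⟩ := Finset.card_pos.1 this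
    exact ⟨y, by simpa using hy⟩
  have hBgood : ∀ z ∉ A, z ∉ sB → ∀ y ∈ A, ¬ bad G N sB z y := by
    intro z hz hzs y hy hb
    -- there is a big orbit at z
    obtain ⟨g, hg, h1, h2⟩ := UT hU hT hsAc hsBc hzAs hzs
    have hbig : N ≤ (orb G (insert z sB) (g yB)).card := by
      rw [← h1, ← h2, ← Finset.image_insert, orb_conj hg,
        Finset.card_image_of_injective _ g.injective]
      exact Finset.card_le_card (hA1 zA hzA hzAs yB hyB)
    have hmeet : ∃ w ∈ orb G (insert z sB) (g yB), w ∈ A := by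
      by_contra! hcon
      have hsub : orb G (insert z sB) (g yB) ⊆ Aᶜ.erase z := by
        intro w hw
        refine Finset.mem_erase.2 ⟨?_, by simpa using hcon w hw⟩
        rintro rfl
        obtain ⟨h, hh, hhw⟩ := mem_orb.1 hw
        have h5 := hh.2 w (Finset.mem_insert_self _ _)
        have h6 : g yB = w := h.injective (hhw.trans h5.symm)
        have : yB = zA := g.injective (h6.trans h2.symm)
        exact hyB (this ▸ hzA)
      have := Finset.card_le_card hsub
      rw [Finset.card_erase_of_mem (by simpa using hz)] at this
      have : 0 < N := by omega
      omega
    obtain ⟨w, hw, hwA⟩ := hmeet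
    obtain ⟨h, hh, hh1, hh2⟩ := hα w hwA y hy
    have hmem : y ∈ orb G (insert z sB) w := by
      refine mem_orb.2 ⟨h, ⟨hh, fun v hv => hh1 v ?_⟩, hh2⟩
      rcases Finset.mem_insert.1 hv with rfl | hv
      · exact hz
      · simpa using hsB hv
    have h7 := hb.2.2
    rw [orb_eq_of_mem hmem, orb_eq_of_mem hw] at h7
    omega
  -- components
  set b := (comp G N sA zA).card with hbdef
  have hball : ∀ s : Finset Ω, s.card = j → ∀ x ∉ s, (comp G N s x).card = b := by
    intro s hs x hx
    obtain ⟨g, hg, h1, h2⟩ := UT hU hT hsAc hs hzAs hx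
    rw [← h1, ← h2, comp_conj hg]
  have hd1 : b ∣ A.card := by
    refine dvd_of_closed (G := G) (N := N) (s := sB) A b ?_ ?_
    · intro x hx
      apply hball sB hsBc
      intro h
      have := hsB h
      simp [hx] at this
    · intro x y h
      have h' := hsym _ hsBc _ _ h
      constructor
      · intro hx
        by_contra hy
        exact hBgood y hy h.2.1 x hx h'
      · intro hy
        by_contra hx
        exact hBgood x hx h.1 y hy h
  have hd2 : b ∣ N := by
    refine dvd_of_closed (G := G) (N := N) (s := sA) Aᶜ b ?_ ?_
    · intro x hx
      apply hball sA hsAc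
      intro h
      have := hsA h
      simp [this] at hx
    · intro x y h
      have h' := hsym _ hsAc _ _ h
      simp only [Finset.mem_compl]
      constructor
      · intro hx hy
        exact hAgood y hy h.2.1 x hx h'
      · intro hy hx
        exact hAgood x hx h.1 y hy h
  have hb1 : b = 1 := Nat.eq_one_of_dvd_coprimes hco hd1 hd2
  -- conclusion
  intro s hs x y hx hy
  obtain ⟨z, t, hz, rfl, ht⟩ := Finset.card_eq_succ.1 hs
  have hbig : ∀ y, y ∉ insert z t → N ≤ (orb G (insert z t) y).card := by
    intro y hy
    by_contra hcon
    have hbad : bad G N t z y := ⟨hz, fun h => hy (Finset.mem_insert_of_mem h), by omega⟩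
    have hc1 := hball t ht z hz
    rw [hb1, Finset.card_eq_one] at hc1
    obtain ⟨w, hw⟩ := hc1
    have m1 : z ∈ comp G N t z := mem_comp.2 (.refl _)
    have m2 : y ∈ comp G N t z := mem_comp.2 (.rel _ _ hbad)
    rw [hw, Finset.mem_singleton] at m1 m2
    exact hy (by rw [m1, m2]; exact Finset.mem_insert_self _ _)
  have hx1 := hbig x hx
  have hy1 := hbig y hy
  have hmeet : ¬ Disjoint (orb G (insert z t) x) (orb G (insert z t) y) := by
    intro hd
    have h1 := Finset.card_union_of_disjoint hd
    have h2 := Finset.card_le_univ (orb G (insert z t) x ∪ orb G (insert z t) y)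
    omega
  obtain ⟨w, hw1, hw2⟩ := Finset.not_disjoint_iff.1 hmeet
  have : y ∈ orb G (insert z t) x := by
    rw [← orb_eq_of_mem hw1, orb_eq_of_mem hw2]
    exact mem_orb.2 ⟨1, one_mem _, rfl⟩
  exact mem_orb.1 this

theorem commutator_three {Ω : Type*} [Fintype Ω] (σ τ : Perm Ω) (a : Ω) (A B : Finset Ω)
    (hA : ∀ z ∉ A, σ z = z) (hB : ∀ z ∉ B, τ z = z) (hAB : A ∩ B = {a})
    (hσ : σ a ≠ a) (hτ : τ a ≠ a) : (σ * τ * σ⁻¹ * τ⁻¹).IsThreeCycle := by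
  have hA' : ∀ z, σ z ≠ z → z ∈ A := fun z h => by by_contra h'; exact h (hA z h')
  have hB' : ∀ z, τ z ≠ z → z ∈ B := fun z h => by by_contra h'; exact h (hB z h')
  have key : ∀ z, z ≠ a → σ z = z ∨ τ z = z := by
    intro z hz
    by_contra! h
    have : z ∈ A ∩ B := Finset.mem_inter.2 ⟨hA' z h.1, hB' z h.2⟩
    rw [hAB] at this
    exact hz (by simpa using this)
  have hne : σ a ≠ τ a := by
    intro h
    have h1 : σ (σ a) ≠ σ a := fun h' => hσ (σ.injective h')
    have h2 : τ (τ a) ≠ τ a := fun h' => hτ (τ.injective h')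
    rcases key (σ a) hσ with h3 | h3
    · exact h1 h3
    · rw [h] at h3; exact h2 h3
  have : σ * τ * σ⁻¹ * τ⁻¹ = swap a (τ a) * swap a (σ a) := by
    rw [mul_inv_eq_iff_eq_mul, mul_inv_eq_iff_eq_mul]
    have ts : τ (σ a) = σ a := (key _ hσ).resolve_left (fun h' => hσ (σ.injective h'))
    have st : σ (τ a) = τ a := (key _ hτ).resolve_right (fun h' => hτ (τ.injective h'))
    have Sa : (swap a (τ a) * swap a (σ a)) a = σ a := by
      rw [Perm.mul_apply, swap_apply_left, swap_apply_of_ne_of_ne hσ hne]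
    have Ss : (swap a (τ a) * swap a (σ a)) (σ a) = τ a := by
      rw [Perm.mul_apply, swap_apply_right, swap_apply_left]
    have St : (swap a (τ a) * swap a (σ a)) (τ a) = a := by
      rw [Perm.mul_apply, swap_apply_of_ne_of_ne hτ hne.symm, swap_apply_right]
    have Sw : ∀ w, w ≠ a → w ≠ σ a → w ≠ τ a → (swap a (τ a) * swap a (σ a)) w = w := by
      intro w h1 h2 h3
      rw [Perm.mul_apply, swap_apply_of_ne_of_ne h1 h2, swap_apply_of_ne_of_ne h1 h3]
    generalize swap a (τ a) * swap a (σ a) = S at *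
    ext z
    simp only [Perm.mul_apply]
    by_cases hz : z = a
    · rw [hz, st, ts, Ss]
    by_cases hs : σ z = z
    · rw [hs]
      by_cases ht : τ z = a
      · rw [ht, Sa]
      have e1 : τ z ≠ τ a := fun h => hz (τ.injective h)
      have e2 : τ z ≠ σ a := by
        intro h
        have : z = σ a := τ.injective (h.trans ts.symm)
        rw [this] at hs
        exact hσ (σ.injective hs)
      rw [Sw _ ht e2 e1]
      rcases key (τ z) ht with h | h
      · exact h
      · rw [τ.injective h, hs]
    · have ht : τ z = z := (key z hz).resolve_left hs
      rw [ht]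
      by_cases hs' : σ z = a
      · rw [hs', St]
      have e0 : τ (σ z) = σ z := (key (σ z) hs').resolve_left (fun h => hs (σ.injective h))
      rw [e0]
      have e1 : σ z ≠ σ a := fun h => hz (σ.injective h)
      have e2 : σ z ≠ τ a := by
        intro h
        have : z = τ a := σ.injective (h.trans st.symm)
        rw [this] at ht
        exact hτ (τ.injective ht)
      rw [Sw _ hs' e1 e2]
  rw [this]
  exact Perm.isThreeCycle_swap_mul_swap_same hτ.symm hσ.symm hne.symm

theorem gt {Ω : Type*} [Fintype Ω] (G : Subgroup (Perm Ω)) (A : Finset Ω)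
    (h2 : 2 ≤ A.card)
    (hlt : A.card < Aᶜ.card) (hco : Nat.Coprime A.card Aᶜ.card)
    (htr : ∀ x y, ∃ g ∈ G, g x = y)
    (hα : ∀ x ∈ A, ∀ y ∈ A, ∃ g ∈ G, (∀ z ∉ A, g z = z) ∧ g x = y)
    (hβ : ∀ x ∉ A, ∀ y ∉ A, ∃ g ∈ G, (∀ z ∈ A, g z = z) ∧ g x = y) :
    alternatingGroup Ω ≤ G := by
  have hind : ∀ j, j ≤ A.card → UU G j ∧ TT G j := by
    intro j
    induction j with
    | zero =>
      intro _
      refine ⟨?_, ?_⟩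
      · intro s s' hs hs'
        rw [Finset.card_eq_zero] at hs hs'
        subst hs hs'
        exact ⟨1, one_mem _, by simp⟩
      · intro s hs x y _ _
        rw [Finset.card_eq_zero] at hs
        subst hs
        obtain ⟨g, hg, h⟩ := htr x y
        exact ⟨g, ⟨hg, by simp⟩, h⟩
    | succ j ih =>
      intro hj
      exact step G A hlt hco hα hβ j hj (ih (by omega)).1 (ih (by omega)).2
  have hT1 := (hind 1 (by omega)).2
  have hprim : MulAction.IsPreprimitive G Ω := by
    apply MulAction.isPreprimitive_of_is_two_pretransitive
    rw [MulAction.is_two_pretransitive_iff]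
    intro a b c d hab hcd
    obtain ⟨g, hg, h1⟩ := htr a c
    obtain ⟨h, hh, h2⟩ := hT1 {c} (by simp) (g b) d
      (by simp only [Finset.mem_singleton]; rw [← h1]; exact fun h => hab (g.injective h).symm)
      (by simpa using hcd.symm)
    refine ⟨⟨h * g, mul_mem hh.1 hg⟩, ?_, ?_⟩
    · change h (g a) = c
      rw [h1]; exact hh.2 c (by simp)
    · exact h2
  -- 3-cycle
  obtain ⟨a, haA⟩ : A.Nonempty := Finset.card_pos.1 (by omega)
  obtain ⟨B, hB, hBc⟩ := Finset.exists_subset_card_eq (show A.card - 1 ≤ Aᶜ.card by omega)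
  have haB : a ∉ B := fun h => by have := hB h; simp [haA] at this
  obtain ⟨g, hg, hgA⟩ := (hind A.card le_rfl).1 A (insert a B) rfl
    (by rw [Finset.card_insert_of_notMem haB, hBc]; omega)
  have hint : A ∩ (insert a B) = {a} := by
    ext z
    simp only [Finset.mem_inter, Finset.mem_insert, Finset.mem_singleton]
    constructor
    · rintro ⟨h1, rfl | h2⟩
      · rfl
      · have := hB h2; simp [h1] at this
    · rintro rfl
      exact ⟨haA, Or.inl rfl⟩
  obtain ⟨a', ha', hne⟩ := Finset.exists_mem_ne (show 1 < A.card by omega) a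
  obtain ⟨σ, hσ, hσ1, hσ2⟩ := hα a haA a' ha'
  obtain ⟨w, hw, hwa⟩ : ∃ w ∈ A, g w = a := by
    have : a ∈ A.image g := by rw [hgA]; exact Finset.mem_insert_self _ _
    simpa using this
  obtain ⟨w', hw', hne'⟩ := Finset.exists_mem_ne (show 1 < A.card by omega) w
  obtain ⟨τ, hτ, hτ1, hτ2⟩ := hα w hw w' hw'
  have h3 := commutator_three σ (g * τ * g⁻¹) a A (insert a B) hσ1
    (by
      intro z hz
      have : g⁻¹ z ∉ A := by
        intro h
        apply hz
        rw [← hgA]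
        exact Finset.mem_image.2 ⟨_, h, by simp⟩
      rw [Perm.mul_apply, Perm.mul_apply, hτ1 _ this]; simp) hint (by rw [hσ2]; exact hne)
    (by
      rw [← hwa]
      rw [Perm.mul_apply, Perm.mul_apply, show g⁻¹ (g w) = w by simp, hτ2]
      exact fun h => hne' (g.injective h))
  refine Perm.alternatingGroup_le_of_isPreprimitive_of_isThreeCycle_mem hprim h3 ?_
  have hc : g * τ * g⁻¹ ∈ G := mul_mem (mul_mem hg hτ) (inv_mem hg)
  exact mul_mem (mul_mem (mul_mem hσ hc) (inv_mem hσ)) (inv_mem hc)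

end Abh
namespace Abh

theorem irr1 {k : Type*} [Field k] (n s t : ℕ) (hs : 0 < s) (htn : t < n)
    (a b : k) (ha : a ≠ 0) (hb : b ^ (n-t) = a) (hnt : ((n - t : ℕ) : k) ≠ 0) :
    Irreducible (X ^ s + C (X ^ n - C a * X ^ t) : k[X][X]) := by
  have hb0 : b ≠ 0 := by
    rintro rfl
    rw [zero_pow (by omega)] at hb
    exact ha hb.symm
  have hm : (X ^ s + C (X ^ n - C a * X ^ t) : k[X][X]).Monic := monic_X_pow_add_C _ hs.ne'
  have hd : (X ^ s + C (X ^ n - C a * X ^ t) : k[X][X]).degree = s := degree_X_pow_add_C hs _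
  have hpr : (Ideal.span {X - C b} : Ideal k[X]).IsPrime := by
    rw [Ideal.span_singleton_prime (X_sub_C_ne_zero b)]
    exact prime_X_sub_C b
  have hbn : b ^ n = a * b ^ t := by
    rw [← hb, ← pow_add]; congr 1; omega
  refine irreducible_of_eisenstein_criterion (P := Ideal.span {X - C b}) hpr ?_ ?_ ?_ ?_ hm.isPrimitive
  · rw [hm.leadingCoeff]
    exact fun h => hpr.ne_top ((Ideal.eq_top_iff_one _).2 h)
  · intro m hm
    rw [hd] at hm
    have hm' : m < s := by exact_mod_cast hm
    rw [coeff_add, coeff_X_pow, if_neg (by omega), zero_add, coeff_C]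
    split_ifs with h
    · rw [Ideal.mem_span_singleton, dvd_iff_isRoot]
      simp [hbn]
    · exact zero_mem _
  · rw [hd]; exact_mod_cast hs
  · rw [coeff_add, coeff_X_pow, if_neg (by omega), zero_add, coeff_C_zero, Ideal.span_singleton_pow,
      Ideal.mem_span_singleton]
    rintro ⟨q, hq⟩
    have := congrArg (fun r => eval b (derivative r)) hq
    have h1 : n = (n - t) + t := by omega
    have h2 : eval b (derivative (X ^ n - C a * X ^ t)) = (n - t : ℕ) * (b ^ (n-1)) := by
      simp [derivative_X_pow]
      rcases Nat.eq_zero_or_pos t with rfl | h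
      · simp [derivative_X_pow]
      · have : b ^ (n - 1) = a * b ^ (t - 1) := by
          rw [← hb, ← pow_add]; congr 1; omega
        rw [this, Nat.cast_sub htn.le]; ring
    have h3 : eval b (derivative ((X - C b) ^ 2 * q)) = 0 := by
      simp [derivative_mul, derivative_pow]
    rw [h2, h3] at this
    exact mul_ne_zero hnt (pow_ne_zero _ hb0) this

theorem irr {k : Type*} [Field k] (n s t : ℕ) (hs : 0 < s) (htn : t < n)
    (a b : k) (ha : a ≠ 0) (hb : b ^ (n-t) = a) (hnt : ((n - t : ℕ) : k) ≠ 0) :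
    Irreducible (X ^ n - C (algebraMap k (RatFunc k) a) * X ^ t + C (RatFunc.X ^ s) : (RatFunc k)[X]) := by
  have h := irr1 n s t hs htn a b ha hb hnt
  rw [← MulEquiv.irreducible_iff (Bivariate.swap (R := k))] at h
  have e : Bivariate.swap (X ^ s + C (X ^ n - C a * X ^ t) : k[X][X]) = 
    X ^ n - C (C a) * X ^ t + C (X ^ s) := by
    simp [Bivariate.swap_apply]; ring
  rw [e] at h
  have hdeg : (C (C a) * X ^ t - C (X ^ s) : k[X][X]).degree < n := by
    refine (degree_sub_le _ _).trans_lt (max_lt ?_ ?_)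
    · exact (degree_C_mul_X_pow_le _ _).trans_lt (by exact_mod_cast htn)
    · exact degree_C_le.trans_lt (by exact_mod_cast (by omega : 0 < n))
  have hm : (X ^ n - C (C a) * X ^ t + C (X ^ s) : k[X][X]).Monic := by
    have := monic_X_pow_sub (p := (C (C a) * X ^ t - C (X ^ s) : k[X][X])) (n := n) hdeg
    rwa [← sub_add] at this
  rw [hm.irreducible_iff_irreducible_map_fraction_map (K := RatFunc k)] at h
  convert h using 1
  simp [Polynomial.map_sub, RatFunc.algebraMap_C, RatFunc.algebraMap_eq_C]
end Abh
namespace Abh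
open Equiv

theorem sgn0 {L : Type*} [Field L] (h2 : (2:L) ≠ 0) {n : ℕ} (v : Fin n → L)
    (hv : Function.Injective v) (π : Perm (Fin n)) (σ : L →+* L) (hσ : ∀ i, σ (v i) = v (π i))
    (d I : L) (hd : σ d = d) (hI : σ I = I) (hI2 : I ^ 2 = -1)
    (hsq : ∏ i, ∏ j ∈ ({i}ᶜ : Finset (Fin n)), (v i - v j) = d ^ 2) : Perm.sign π = 1 := by
  set δ : L := ∏ i, ∏ j ∈ Finset.Ioi i, (v i - v j) with hδ
  have hδ0 : δ ≠ 0 := by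
    rw [hδ, Finset.prod_ne_zero_iff]
    intro i _
    rw [Finset.prod_ne_zero_iff]
    intro j hj
    rw [Finset.mem_Ioi] at hj
    exact sub_ne_zero.2 (fun h => hj.ne (hv h))
  have h1 : σ δ = (Perm.sign π : ℤ) * δ := by
    rw [hδ, ← π.prod_Ioi_comp_eq_sign_mul_prod (f := fun i j => v i - v j) (by intros; ring)]
    simp [map_prod, hσ]
  have h3 : ∃ u : L, (u = 1 ∨ u = -1) ∧ d ^ 2 = u * δ ^ 2 := by
    have := Finset.prod_prod_Ioi_mul_eq_prod_prod_off_diag (fun i j : Fin n => v j - v i)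
    rw [hsq] at this
    refine ⟨∏ i : Fin n, ∏ j ∈ Finset.Ioi i, (-1), ?_, ?_⟩
    · simp only [Finset.prod_const, Finset.prod_pow_eq_pow_sum]
      exact neg_one_pow_eq_or _ _
    · rw [← this, hδ, ← Finset.prod_pow, ← Finset.prod_mul_distrib]
      refine Finset.prod_congr rfl fun i _ => ?_
      rw [← Finset.prod_pow, ← Finset.prod_mul_distrib]
      refine Finset.prod_congr rfl fun j _ => ?_
      ring
  have h4 : σ δ = δ := by
    obtain ⟨u, rfl | rfl, h⟩ := h3
    · rw [one_mul, sq_eq_sq_iff_eq_or_eq_neg] at h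
      rcases h with h | h
      · rw [← h, hd]
      · have : δ = - d := by rw [h]; ring
        rw [this, map_neg, hd]
    · have : (I * d) ^ 2 = δ ^ 2 := by
        rw [mul_pow, hI2, h]; ring
      rw [sq_eq_sq_iff_eq_or_eq_neg] at this
      rcases this with h | h
      · rw [← h, map_mul, hd, hI]
      · have : δ = - (I * d) := by rw [h]; ring
        rw [this, map_neg, map_mul, hd, hI]
  rw [h4] at h1
  rcases Int.units_eq_one_or (Perm.sign π) with h | h
  · exact h
  · rw [h] at h1
    simp at h1
    have : 2 * δ = 0 := by linear_combination h1
    simp [h2, hδ0] at this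

theorem sgn1 {L : Type*} [Field L] (h2 : (2:L) ≠ 0) {Ω : Type*} [Fintype Ω] (v : Ω → L)
    (hv : Function.Injective v) (π : Perm Ω) (σ : L →+* L) (hσ : ∀ i, σ (v i) = v (π i))
    (d I : L) (hd : σ d = d) (hI : σ I = I) (hI2 : I ^ 2 = -1) (F : L[X])
    (hF : F = ∏ i, (X - C (v i)))
    (hsq : ∏ i, eval (v i) (derivative F) = d ^ 2) : Perm.sign π = 1 := by
  let e := Fintype.equivFin Ω
  rw [← Perm.sign_permCongr e]
  refine sgn0 h2 (v ∘ e.symm) (hv.comp e.symm.injective) _ σ ?_ d I hd hI hI2 ?_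
  · intro i; simp [hσ, Equiv.permCongr_apply]
  · rw [← hsq, ← e.symm.prod_comp]
    refine Finset.prod_congr rfl fun i _ => ?_
    have := eval_multiset_prod_X_sub_C_derivative (S := (Finset.univ.val.map v)) (r := v (e.symm i)) (by simp)
    rw [Multiset.map_map] at this
    have hF' : F = (Multiset.map ((fun a => X - C a) ∘ v) Finset.univ.val).prod := by rw [hF]; rfl
    rw [hF', this, ← Multiset.map_erase _ hv, Multiset.map_map, ← Finset.erase_val]
    change _ = ∏ j ∈ Finset.univ.erase (e.symm i), (v (e.symm i) - v j)
    symm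
    refine Finset.prod_bij (fun j _ => e j) ?_ ?_ ?_ ?_
    · intro j hj; simp at hj ⊢; intro h; exact hj (by rw [← h]; simp)
    · intro a _ b _ h; simpa using h
    · intro b hb; refine ⟨e.symm b, ?_, by simp⟩
      simpa using hb
    · intro j _; simp

theorem sgn2 {k L : Type*} [Field k] [IsAlgClosed k] [Field L] (h2 : (2:L) ≠ 0) (i : k →+* L)
    {Ω : Type*} [Fintype Ω] (v : Ω → L)
    (hv : Function.Injective v) (π : Perm Ω) (σ : L →+* L) (hσ : ∀ i, σ (v i) = v (π i))
    (hi : ∀ c, σ (i c) = i c) (x : L) (hx : σ x = x) (a : k) (n s t : ℕ)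
    (hc : Fintype.card Ω = n) (hn0 : 0 < n) (ht : 0 < t) (hn : (n : k) = 0) (hst : Even (s * (t - 1)))
    (hF : ∏ i, (X - C (v i)) = X ^ n - C (i a) * X ^ t + C (x ^ s)) : Perm.sign π = 1 := by
  obtain ⟨I, hI⟩ := IsAlgClosed.exists_pow_nat_eq (-1 : k) (n := 2) (by norm_num)
  obtain ⟨c, hc'⟩ := IsAlgClosed.exists_pow_nat_eq ((-a * t)^n * ((-1)^n)^(t-1)) (n := 2) (by norm_num)
  obtain ⟨m, hm⟩ := hst
  have hnL : (n : L) = 0 := by rw [← map_natCast i, hn, map_zero]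
  refine sgn1 h2 v hv π σ hσ (i c * x ^ m) (i I) (by simp [hi, hx]) (hi _) (by rw [← map_pow, hI]; simp)
    _ hF.symm ?_
  have hd : ∀ y, eval y (derivative (X ^ n - C (i a) * X ^ t + C (x ^ s))) = i (-a * t) * y ^ (t-1) := by
    intro y
    rw [derivative_add, derivative_C]
    simp [derivative_X_pow, hnL, mul_assoc]
  have hp : ∏ j, v j = (-1)^n * x ^ s := by
    have := congrArg (eval 0) hF
    simp [eval_prod, hn0.ne', ht.ne', Finset.prod_neg, hc] at this
    rw [← this, ← mul_assoc, ← mul_pow]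
    simp
  simp only [hd]
  rw [Finset.prod_mul_distrib, Finset.prod_pow, hp, Finset.prod_const, Finset.card_univ, hc,
    mul_pow, mul_pow, ← map_pow i c, hc', ← pow_mul x, ← pow_mul x, hm]
  simp only [map_mul, map_pow, map_neg, map_one]
  ring
end Abh
namespace Abh

theorem hens {k : Type*} [Field k] (F : (PowerSeries k)[X]) (hF : F.Monic) (b : k)
   (h0 : PowerSeries.constantCoeff (F.eval (PowerSeries.C b)) = 0)
   (h1 : PowerSeries.constantCoeff (F.derivative.eval (PowerSeries.C b)) ≠ 0) :
   ∃ y : PowerSeries k, F.eval y = 0 ∧ PowerSeries.constantCoeff y = b := by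
  have hH : HenselianRing (PowerSeries k) (Ideal.span {PowerSeries.X}) := inferInstance
  obtain ⟨y, hy, hy'⟩ := hH.is_henselian F hF (PowerSeries.C b) (by
    rw [Ideal.mem_span_singleton, PowerSeries.X_dvd_iff]; exact h0) (by
    apply IsUnit.map
    rw [PowerSeries.isUnit_iff_constantCoeff]
    exact isUnit_iff_ne_zero.2 h1)
  refine ⟨y, hy, ?_⟩
  rw [Ideal.mem_span_singleton, PowerSeries.X_dvd_iff] at hy'
  simpa [sub_eq_zero] using hy'

theorem monicTri {R : Type*} [CommRing R] (n t : ℕ) (htn : t < n) (A B : R) :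
   (X ^ n - C A * X ^ t + C B).Monic := by
  nontriviality R
  have hdeg : (C A * X ^ t - C B : R[X]).degree < n := by
    refine (degree_sub_le _ _).trans_lt (max_lt ?_ ?_)
    · exact (degree_C_mul_X_pow_le _ _).trans_lt (by exact_mod_cast htn)
    · exact degree_C_le.trans_lt (by exact_mod_cast (by omega : 0 < n))
  have := monic_X_pow_sub (p := (C A * X ^ t - C B : R[X])) (n := n) hdeg
  rwa [← sub_add] at this

theorem degTri {R : Type*} [CommRing R] [Nontrivial R] (n t : ℕ) (htn : t < n) (A B : R) :
   (X ^ n - C A * X ^ t + C B).natDegree = n := by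
  have hdeg : (C A * X ^ t - C B : R[X]).degree < n := by
    refine (degree_sub_le _ _).trans_lt (max_lt ?_ ?_)
    · exact (degree_C_mul_X_pow_le _ _).trans_lt (by exact_mod_cast htn)
    · exact degree_C_le.trans_lt (by exact_mod_cast (by omega : 0 < n))
  rw [sub_add]
  apply natDegree_eq_of_degree_eq_some
  rw [degree_sub_eq_left_of_degree_lt]
  · simp
  · simpa using hdeg

theorem rootTri {k : Type*} [Field k] (n m N : ℕ) (hN : 0 < N) (hm : 0 < m) (hmn : m < n)
    (a b : k) (ha : a ≠ 0) (hb : b ^ (n - m) = a) (hnt : ((n - m : ℕ) : k) ≠ 0) :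
    ∃ y : PowerSeries k, y ^ n - PowerSeries.C a * y ^ m + PowerSeries.X ^ N = 0
     ∧ PowerSeries.constantCoeff y = b := by
  have hb0 : b ≠ 0 := by
    rintro rfl
    rw [zero_pow (by omega)] at hb
    exact ha hb.symm
  have hbn : b ^ n = a * b ^ m := by
    rw [← hb, ← pow_add]; congr 1; omega
  have hbn' : b ^ (n-1) = a * b ^ (m-1) := by
    rw [← hb, ← pow_add]; congr 1; omega
  obtain ⟨y, h, h'⟩ := hens (X ^ n - C (PowerSeries.C a) * X ^ m + C (PowerSeries.X ^ N))
    (monicTri n m hmn _ _) b (by simp [hbn, hN.ne']) (by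
      rw [derivative_add, derivative_C]
      simp [derivative_X_pow, hbn']
      rw [show (n : k) * (a * b ^ (m-1)) - a * (m * b ^ (m-1)) = (n - m : ℕ) * (a * b ^ (m-1)) by
        rw [Nat.cast_sub hmn.le]; ring]
      exact mul_ne_zero hnt (mul_ne_zero ha (pow_ne_zero _ hb0)))
  refine ⟨y, ?_, h'⟩
  simpa using h

theorem rootA {k : Type*} [Field k] (n t e : ℕ) (he : 0 < e) (ht : 0 < t) (htn : t < n)
    (a w : k) (ha : a ≠ 0) (hw : a * w ^ t = 1) (hnt : (t : k) ≠ 0) :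
    ∃ y : PowerSeries k, y ^ n - PowerSeries.C a * y ^ t + PowerSeries.X ^ (t * e) = 0
     ∧ PowerSeries.constantCoeff y = 0 ∧ PowerSeries.coeff e y = w := by
  have hw0 : w ≠ 0 := by
    rintro rfl
    rw [zero_pow (by omega)] at hw
    simp at hw
  have h3 : n - (n - t) = t := by omega
  obtain ⟨z, hz, hz0⟩ := rootTri n (n-t) (e * (n-t)) (Nat.mul_pos he (by omega)) (by omega) (by omega)
    a w⁻¹ ha (by rw [h3, inv_pow]; exact (eq_inv_of_mul_eq_one_left hw).symm) (by rwa [h3])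
  have hzz : PowerSeries.constantCoeff z ≠ 0 := by rw [hz0]; exact inv_ne_zero hw0
  have hu := PowerSeries.mul_inv_cancel z hzz
  set u := z⁻¹ with hu'
  have hu0 : PowerSeries.constantCoeff u = w := by
    rw [hu', PowerSeries.constantCoeff_inv, hz0, inv_inv]
  refine ⟨PowerSeries.X ^ e * u, ?_, ?_, ?_⟩
  · obtain ⟨m, rfl⟩ : ∃ m, n = t + m := ⟨n - t, by omega⟩
    have h4 : t + m - t = m := by omega
    rw [h4] at hz
    have e1 : (PowerSeries.X ^ e * u) ^ (t+m) - PowerSeries.C a * (PowerSeries.X ^ e * u) ^ t + PowerSeries.X ^ (t * e)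
       = PowerSeries.X ^ (t * e) * u ^ (t + m) * (z ^ (t+m) - PowerSeries.C a * z ^ m + PowerSeries.X ^ (e * m)) := by
      have e2 : u ^ (t+m) * z ^ (t+m) = 1 := by rw [← mul_pow, mul_comm u, hu, one_pow]
      have e3 : u ^ (t+m) * z ^ m = u ^ t := by rw [pow_add, mul_assoc, ← mul_pow, mul_comm u z, hu, one_pow, mul_one]
      rw [mul_add, mul_sub, mul_assoc _ _ (z ^ _), e2,
        show PowerSeries.X ^ (t * e) * u ^ (t + m) * (PowerSeries.C a * z ^ m) = 
          PowerSeries.X ^ (t * e) * PowerSeries.C a * (u ^ (t + m) * z ^ m) by ring, e3]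
      ring
    rw [e1, hz, mul_zero]
  · simp [he.ne']
  · have := PowerSeries.coeff_X_pow_mul u e 0
    rw [zero_add] at this
    rw [this]
    simpa using hu0

theorem cardRoots {k : Type*} [Field k] [IsAlgClosed k] (m : ℕ) (hmk : (m : k) ≠ 0) (c : k)
    (hc : c ≠ 0) : (nthRootsFinset m c).card = m := by
  have hs := separable_X_pow_sub_C c hmk hc
  rw [nthRootsFinset_def, nthRoots, Multiset.toFinset_card_of_nodup (nodup_roots hs),
    ← (IsAlgClosed.splits _).natDegree_eq_card_roots, natDegree_X_pow_sub_C]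

theorem data {k : Type*} [Field k] [IsAlgClosed k] (n t e : ℕ) (he : 0 < e) (ht : 0 < t) (htn : t < n)
    (a : k) (ha : a ≠ 0) (htk : (t : k) ≠ 0) (hntk : ((n - t : ℕ) : k) ≠ 0) :
    ∃ (T1 T2 : Finset k) (ρ : T1 ⊕ T2 → PowerSeries k),
      T1.card = t ∧ T2.card = n - t ∧ (∀ w ∈ T1, a * w ^ t = 1) ∧ (∀ b ∈ T2, b ^ (n - t) = a) ∧
      (∀ i, (ρ i) ^ n - PowerSeries.C a * (ρ i) ^ t + PowerSeries.X ^ (t * e) = 0) ∧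
      (∀ w, PowerSeries.constantCoeff (ρ (.inl w)) = 0 ∧ PowerSeries.coeff e (ρ (.inl w)) = w) ∧
      (∀ b, PowerSeries.constantCoeff (ρ (.inr b)) = b) ∧ Function.Injective ρ := by
  have h1 : ∀ w : nthRootsFinset t a⁻¹, a * w.1 ^ t = 1 := fun w => by
    rw [(mem_nthRootsFinset ht _).1 w.2, mul_inv_cancel₀ ha]
  have h2 : ∀ b : nthRootsFinset (n-t) a, b.1 ^ (n-t) = a := fun w =>
    (mem_nthRootsFinset (by omega) _).1 w.2
  choose ρ1 h11 h12 using fun w : nthRootsFinset t a⁻¹ => rootA n t e he ht htn a w ha (h1 w) htk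
  choose ρ2 h21 h22 using fun b : nthRootsFinset (n-t) a =>
    rootTri n t (t * e) (Nat.mul_pos ht he) ht htn a b ha (h2 b) hntk
  have hne : ∀ b : nthRootsFinset (n-t) a, b.1 ≠ 0 := fun b hb => by
    have := h2 b
    rw [hb, zero_pow (by omega)] at this
    exact ha this.symm
  refine ⟨_, _, Sum.elim ρ1 ρ2, cardRoots t htk a⁻¹ (inv_ne_zero ha), cardRoots (n-t) hntk a ha,
    fun w hw => h1 ⟨w, hw⟩, fun b hb => h2 ⟨b, hb⟩, ?_, h12, h22, ?_⟩
  · rintro (i | i)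
    · exact h11 i
    · exact h21 i
  · rintro (i | i) (j | j) h <;> simp only [Sum.elim_inl, Sum.elim_inr] at h
    · congr 1; ext; rw [← (h12 i).2, h, (h12 j).2]
    · exact absurd (by rw [← h22 j, ← h, (h12 i).1]) (hne j)
    · exact absurd (by rw [← h22 i, h, (h12 j).1]) (hne i)
    · congr 1; ext; rw [← h22 i, h, h22 j]

theorem prodRoots {R ι : Type*} [Field R] [Fintype ι] (F : R[X]) (hF : F.Monic)
    (ρ : ι → R) (hρ : Function.Injective ρ) (hd : F.natDegree = Fintype.card ι) (h : ∀ i, F.eval (ρ i) = 0) :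
    F = ∏ i, (X - C (ρ i)) := by
  apply eq_of_monic_of_dvd_of_natDegree_le (monic_prod_of_monic _ _ fun i _ => monic_X_sub_C _) hF
  · apply Finset.prod_dvd_of_coprime
    · intro i _ j _ hij
      exact pairwise_coprime_X_sub_C hρ hij
    · intro i _; rw [dvd_iff_isRoot]; exact h i
  · rw [natDegree_prod_of_monic _ _ fun i _ => monic_X_sub_C _]
    simp [hd]
open Equiv

theorem restr {K L E : Type*} [Field K] [Field L] [Field E] [Algebra K L] [Algebra K E]
    (φ : L →ₐ[K] E) (s : Set L) (hs : Algebra.adjoin K s = ⊤) (σ : E →+* E)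
    (hK : ∀ q : K, ∃ q' : K, σ (algebraMap K E q) = algebraMap K E q')
    (hr : ∀ y ∈ s, ∃ l, φ l = σ (φ y)) : ∃ τ : L →+* L, ∀ l, φ (τ l) = σ (φ l) := by
  have h : ∀ l, ∃ l', φ l' = σ (φ l) := by
    intro l
    have hl : l ∈ Algebra.adjoin K s := by rw [hs]; trivial
    induction hl using Algebra.adjoin_induction with
    | mem x hx => exact hr x hx
    | algebraMap q =>
      obtain ⟨q', hq'⟩ := hK q
      exact ⟨algebraMap K L q', by simp [hq']⟩
    | add x y _ _ hx hy =>
      obtain ⟨x', hx⟩ := hx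
      obtain ⟨y', hy⟩ := hy
      exact ⟨x' + y', by simp [hx, hy]⟩
    | mul x y _ _ hx hy =>
      obtain ⟨x', hx⟩ := hx
      obtain ⟨y', hy⟩ := hy
      exact ⟨x' * y', by simp [hx, hy]⟩
  choose τ hτ using h
  have hi : Function.Injective φ := φ.toRingHom.injective
  exact ⟨{ toFun := τ
           map_one' := hi (by simp [hτ])
           map_mul' := fun x y => hi (by simp [hτ])
           map_zero' := hi (by simp [hτ])
           map_add' := fun x y => hi (by simp [hτ]) }, hτ⟩

theorem restrE {K L E : Type*} [Field K] [Field L] [Field E] [Algebra K L] [Algebra K E]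
    (φ : L →ₐ[K] E) (s : Set L) (hs : Algebra.adjoin K s = ⊤) (σ σ' : E →+* E)
    (h1 : ∀ x, σ (σ' x) = x) (h2 : ∀ x, σ' (σ x) = x)
    (hK : ∀ q : K, ∃ q' : K, σ (algebraMap K E q) = algebraMap K E q')
    (hr : ∀ y ∈ s, ∃ l, φ l = σ (φ y))
    (hK' : ∀ q : K, ∃ q' : K, σ' (algebraMap K E q) = algebraMap K E q')
    (hr' : ∀ y ∈ s, ∃ l, φ l = σ' (φ y)) : ∃ τ : L ≃+* L, ∀ l, φ (τ l) = σ (φ l) := by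
  obtain ⟨τ, hτ⟩ := restr φ s hs σ hK hr
  obtain ⟨τ', hτ'⟩ := restr φ s hs σ' hK' hr'
  have hi : Function.Injective φ := φ.toRingHom.injective
  exact ⟨RingEquiv.ofRingHom τ τ' (by ext x; exact hi (by simp [hτ, hτ', h1]))
    (by ext x; exact hi (by simp [hτ, hτ', h2])), hτ⟩

theorem rescC {k : Type*} [Field k] (μ c : k) : PowerSeries.rescale μ (PowerSeries.C c) = PowerSeries.C c := by
  ext m
  rw [PowerSeries.coeff_rescale, PowerSeries.coeff_C]
  split_ifs with h <;> simp [h]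

theorem sigE {k : Type*} [Field k] (μ : k) (hμ : μ ≠ 0) :
    ∃ σ σ' : LaurentSeries k →+* LaurentSeries k, (∀ x, σ (σ' x) = x) ∧ (∀ x, σ' (σ x) = x) ∧
     (∀ P : PowerSeries k, σ (HahnSeries.ofPowerSeries ℤ k P)
        = HahnSeries.ofPowerSeries ℤ k (PowerSeries.rescale μ P)) ∧
     (∀ P : PowerSeries k, σ' (HahnSeries.ofPowerSeries ℤ k P)
        = HahnSeries.ofPowerSeries ℤ k (PowerSeries.rescale μ⁻¹ P)) := by
  let r : PowerSeries k ≃+* PowerSeries k := RingEquiv.ofRingHom (PowerSeries.rescale μ)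
    (PowerSeries.rescale μ⁻¹)
    (by ext x; simp [PowerSeries.rescale_rescale, hμ]) (by ext x; simp [PowerSeries.rescale_rescale, hμ])
  let S : LaurentSeries k ≃+* LaurentSeries k := IsFractionRing.ringEquivOfRingEquiv r
  refine ⟨S, S.symm, by simp, by simp, fun P => ?_, fun P => ?_⟩
  · exact IsFractionRing.ringEquivOfRingEquiv_algebraMap (K := LaurentSeries k) (L := LaurentSeries k) r P
  · exact IsFractionRing.ringEquivOfRingEquiv_algebraMap (K := LaurentSeries k) (L := LaurentSeries k) r.symm P

section
open scoped RatFunc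

theorem algC {k : Type*} [Field k] (c : k) : algebraMap (RatFunc k) (LaurentSeries k) (algebraMap k (RatFunc k) c)
    = HahnSeries.ofPowerSeries ℤ k (PowerSeries.C c) := by
  have := RatFunc.coe_coe (Polynomial.C c)
  rw [Polynomial.coe_C] at this
  rw [this]
  change _ = algebraMap (RatFunc k) (LaurentSeries k) (algebraMap k[X] (RatFunc k) (Polynomial.C c))
  rw [RatFunc.algebraMap_C, RatFunc.algebraMap_eq_C]

theorem algX {k : Type*} [Field k] : algebraMap (RatFunc k) (LaurentSeries k) RatFunc.X
    = HahnSeries.ofPowerSeries ℤ k PowerSeries.X := by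
  have := RatFunc.coe_coe (Polynomial.X : k[X])
  rw [Polynomial.coe_X] at this
  rw [this]
  change _ = algebraMap (RatFunc k) (LaurentSeries k) (algebraMap k[X] (RatFunc k) Polynomial.X)
  rw [RatFunc.algebraMap_X]

theorem ratK {k : Type*} [Field k] (μ : k) (σ : LaurentSeries k →+* LaurentSeries k)
    (hσ : ∀ P : PowerSeries k, σ (HahnSeries.ofPowerSeries ℤ k P)
        = HahnSeries.ofPowerSeries ℤ k (PowerSeries.rescale μ P)) (q : RatFunc k) :
    ∃ q' : RatFunc k, σ (algebraMap _ _ q) = algebraMap _ _ q' := by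
  have hC : ∀ c : k, σ (algebraMap (RatFunc k) (LaurentSeries k) (RatFunc.C c)) = algebraMap _ _ (RatFunc.C c) := by
    intro c
    rw [← RatFunc.algebraMap_eq_C, algC, hσ, rescC]
  have hX : σ (algebraMap (RatFunc k) (LaurentSeries k) RatFunc.X) = algebraMap _ _ (RatFunc.C μ * RatFunc.X) := by
    rw [map_mul, ← RatFunc.algebraMap_eq_C, algC, algX, hσ]; simp [PowerSeries.rescale_X]
  have hp : ∀ p : k[X], ∃ q' : RatFunc k, σ (algebraMap _ _ (algebraMap k[X] (RatFunc k) p)) = algebraMap _ _ q' := by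
    intro p
    induction p using Polynomial.induction_on' with
    | add p q hp hq =>
      obtain ⟨x', hx⟩ := hp
      obtain ⟨y', hy⟩ := hq
      exact ⟨x' + y', by simp only [map_add, hx, hy]⟩
    | monomial m c =>
      refine ⟨RatFunc.C c * (RatFunc.C μ * RatFunc.X) ^ m, ?_⟩
      rw [← C_mul_X_pow_eq_monomial, map_mul, map_pow, RatFunc.algebraMap_C, RatFunc.algebraMap_X]
      simp only [map_mul, map_pow, hC, hX]
  induction q using RatFunc.induction_on with
  | f p q hq =>
    obtain ⟨x', hx⟩ := hp p
    obtain ⟨y', hy⟩ := hp q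
    exact ⟨x' / y', by simp only [map_div₀, hx, hy]⟩
/-- the constants of `k` in an extension of `k(X)` -/
noncomputable def kap (k : Type*) [Field k] (L : Type*) [Field L] [Algebra (RatFunc k) L] : k →+* L :=
  (algebraMap (RatFunc k) L).comp (algebraMap k (RatFunc k))

/-- the image of `X` in an extension of `k(X)` -/
noncomputable def xx (k : Type*) [Field k] (L : Type*) [Field L] [Algebra (RatFunc k) L] : L :=
  algebraMap (RatFunc k) L RatFunc.X

theorem memRoot {k : Type*} [Field k] {n t s : ℕ} (htn : t < n) {a : k} {f : (RatFunc k)[X]}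
    (hf : f = X ^ n - C (algebraMap k (RatFunc k) a) * X ^ t + C (RatFunc.X ^ s))
    {L : Type*} [Field L] [Algebra (RatFunc k) L] (y : L) :
    y ∈ f.rootSet L ↔ y ^ n - kap k L a * y ^ t + xx k L ^ s = 0 := by
  have hm : f.Monic := by rw [hf]; exact monicTri n t htn _ _
  rw [mem_rootSet, and_iff_right hm.ne_zero, hf]
  simp [kap, xx]

theorem mapF {k : Type*} [Field k] {n t s : ℕ} {a : k} {f : (RatFunc k)[X]}
    (hf : f = X ^ n - C (algebraMap k (RatFunc k) a) * X ^ t + C (RatFunc.X ^ s))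
    (L : Type*) [Field L] [Algebra (RatFunc k) L] :
    f.map (algebraMap _ L) = X ^ n - C (kap k L a) * X ^ t + C (xx k L ^ s) := by
  rw [hf]; simp [kap, xx]

theorem mainS {k : Type*} [Field k] [IsAlgClosed k] (n t e : ℕ) (he : 0 < e) (ht : 0 < t) (htn : t < n)
    (a : k) (ha : a ≠ 0) (htk : (t : k) ≠ 0) (hntk : ((n - t : ℕ) : k) ≠ 0) (f : (RatFunc k)[X])
    (hf : f = X ^ n - C (algebraMap k (RatFunc k) a) * X ^ t + C (RatFunc.X ^ (t * e)))
    (L : Type*) [Field L] [Algebra (RatFunc k) L] [IsSplittingField (RatFunc k) L f] :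
    ∃ (T1 T2 : Finset k) (ρ : T1 ⊕ T2 → PowerSeries k) (r : T1 ⊕ T2 ≃ f.rootSet L),
      T1.card = t ∧ T2.card = n - t ∧ (∀ w ∈ T1, a * w ^ t = 1) ∧ (∀ b ∈ T2, b ^ (n - t) = a) ∧
      (∀ w, PowerSeries.constantCoeff (ρ (.inl w)) = 0 ∧ PowerSeries.coeff e (ρ (.inl w)) = w) ∧
      (∀ b, PowerSeries.constantCoeff (ρ (.inr b)) = b) ∧
      ∀ μ lam : k, μ ≠ 0 → lam ≠ 0 → lam ^ (n - t) = 1 → μ ^ (t * e) = lam ^ t →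
        ∃ (σ : L ≃+* L) (π : Perm (f.rootSet L)), (∀ c, σ (kap k L c) = kap k L c) ∧
          σ (xx k L) = kap k L μ * xx k L ∧ (∀ y, (π y : L) * kap k L lam = σ y) ∧
          ∀ i j, π (r i) = r j → ∀ m, lam * PowerSeries.coeff m (ρ j) = μ ^ m * PowerSeries.coeff m (ρ i) := by
  obtain ⟨T1, T2, ρ, hT1, hT2, hw, hb, hroot, hA, hB, hinj⟩ := data n t e he ht htn a ha htk hntk
  have hcard : Fintype.card (T1 ⊕ T2) = n := by simp [hT1, hT2]; omega
  let E := LaurentSeries k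
  let oE := HahnSeries.ofPowerSeries ℤ k
  have hoE : Function.Injective oE := HahnSeries.ofPowerSeries_injective
  have hkE : ∀ c, kap k E c = oE (PowerSeries.C c) := algC
  have hxE : xx k E = oE PowerSeries.X := algX
  have hprod : f.map (algebraMap _ E) = ∏ i, (X - C (oE (ρ i))) := by
    rw [mapF hf]
    refine prodRoots _ (monicTri n t htn _ _) _ (hoE.comp hinj) (by rw [degTri n t htn, hcard]) ?_
    intro i
    simp only [eval_add, eval_sub, eval_mul, eval_C, eval_X, eval_pow, hkE, hxE, Function.comp]
    rw [← map_pow, ← map_pow, ← map_pow, ← map_mul, ← map_sub, ← map_add, hroot, map_zero]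
  have hrE : ∀ z : E, z ^ n - kap k E a * z ^ t + xx k E ^ (t * e) = 0 → ∃ i, z = oE (ρ i) := by
    intro z hz
    have := congrArg (eval z) hprod
    rw [mapF hf] at this
    simp only [eval_add, eval_sub, eval_mul, eval_C, eval_X, eval_pow, hz, eval_prod] at this
    obtain ⟨i, _, hi⟩ := Finset.prod_eq_zero_iff.1 this.symm
    exact ⟨i, sub_eq_zero.1 hi⟩
  have hspl : (f.map (algebraMap _ E)).Splits := by
    rw [hprod]; exact Splits.prod fun i _ => Splits.X_sub_C _
  let φ : L →ₐ[RatFunc k] E := IsSplittingField.lift L f hspl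
  have hφi : Function.Injective φ := φ.toRingHom.injective
  have hφk : ∀ c, φ (kap k L c) = kap k E c := fun c => φ.commutes _
  have hφx : φ (xx k L) = xx k E := φ.commutes _
  have himg : φ '' f.rootSet L = f.rootSet E := (IsSplittingField.splits L f).image_rootSet φ
  have hex : ∀ i, ∃ y : f.rootSet L, φ y = oE (ρ i) := by
    intro i
    have : oE (ρ i) ∈ f.rootSet E := by
      rw [memRoot htn hf, hkE, hxE, ← map_pow, ← map_pow, ← map_pow, ← map_mul, ← map_sub, ← map_add, hroot, map_zero]
    rw [← himg] at this
    obtain ⟨y, hy, h⟩ := this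
    exact ⟨⟨y, hy⟩, h⟩
  choose r0 hr0 using hex
  have hsurj : Function.Surjective r0 := by
    intro y
    have : φ y ∈ f.rootSet E := by rw [← himg]; exact ⟨y, y.2, rfl⟩
    rw [memRoot htn hf] at this
    obtain ⟨i, hi⟩ := hrE _ this
    exact ⟨i, Subtype.ext (hφi (by rw [hr0, hi]))⟩
  have hr0i : Function.Injective r0 := fun i j h => hinj (hoE (by rw [← hr0, h, hr0]))
  have key : ∀ μ lam : k, μ ≠ 0 → lam ≠ 0 → lam ^ (n - t) = 1 → μ ^ (t * e) = lam ^ t →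
      ∀ σ : E →+* E, (∀ P : PowerSeries k, σ (oE P) = oE (PowerSeries.rescale μ P)) →
      ∀ i, ∃ j, σ (oE (ρ i)) = kap k E lam * oE (ρ j) := by
    intro μ lam hμ hlam hl1 hl2 σ hσ i
    have h1 : σ (kap k E a) = kap k E a := by rw [hkE, hσ, rescC]
    have h2 : σ (xx k E) = kap k E μ * xx k E := by rw [hxE, hσ, hkE, ← map_mul, PowerSeries.rescale_X]
    have h3 : oE (ρ i) ^ n - kap k E a * oE (ρ i) ^ t + xx k E ^ (t * e) = 0 := by
      rw [hkE, hxE, ← map_pow, ← map_pow, ← map_pow, ← map_mul, ← map_sub, ← map_add, hroot, map_zero]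
    have h4 := congrArg σ h3
    simp only [map_add, map_sub, map_mul, map_pow, map_zero, h1, h2] at h4
    have hl0 : kap k E lam ≠ 0 := by simpa using hlam
    have hln : lam ^ n = lam ^ t := by
      rw [show n = (n - t) + t by omega, pow_add, hl1, one_mul]
    have hln' : kap k E lam ^ n = kap k E lam ^ t := by rw [← map_pow, hln, map_pow]
    have hlm : kap k E μ ^ (t * e) = kap k E lam ^ t := by rw [← map_pow, hl2, map_pow]
    obtain ⟨z, hz⟩ : ∃ z, σ (oE (ρ i)) = kap k E lam * z := ⟨(kap k E lam)⁻¹ * σ (oE (ρ i)), by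
      rw [mul_inv_cancel_left₀ hl0]⟩
    rw [hz, mul_pow, mul_pow, mul_pow, hln', hlm] at h4
    have h5 : kap k E lam ^ t * (z ^ n - kap k E a * z ^ t + xx k E ^ (t * e)) = 0 := by
      rw [← h4]; ring
    rcases mul_eq_zero.1 h5 with h | h
    · exact absurd h (pow_ne_zero _ hl0)
    · obtain ⟨j, hj⟩ := hrE z h
      exact ⟨j, by rw [hz, hj]⟩
  refine ⟨T1, T2, ρ, Equiv.ofBijective r0 ⟨hr0i, hsurj⟩, hT1, hT2, hw, hb, hA, hB, ?_⟩
  intro μ lam hμ hlam hl1 hl2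
  have hl0 : kap k L lam ≠ 0 := by simpa using hlam
  obtain ⟨σE, σE', e1, e2, e3, e4⟩ := sigE μ hμ
  have ks := key μ lam hμ hlam hl1 hl2 σE e3
  have ks' := key μ⁻¹ lam⁻¹ (inv_ne_zero hμ) (inv_ne_zero hlam) (by rw [inv_pow, hl1, inv_one])
    (by rw [inv_pow, hl2, inv_pow]) σE' e4
  obtain ⟨σ, hσ⟩ := restrE φ (f.rootSet L) (IsSplittingField.adjoin_rootSet L f) σE σE' e1 e2
    (ratK μ σE e3) (by
      intro y hy
      obtain ⟨i, hi⟩ := hsurj ⟨y, hy⟩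
      obtain ⟨j, hj⟩ := ks i
      refine ⟨kap k L lam * r0 j, ?_⟩
      have : y = r0 i := by rw [hi]
      rw [map_mul, hr0, hφk, this, hr0, hj]) (ratK μ⁻¹ σE' e4) (by
      intro y hy
      obtain ⟨i, hi⟩ := hsurj ⟨y, hy⟩
      obtain ⟨j, hj⟩ := ks' i
      refine ⟨kap k L lam⁻¹ * r0 j, ?_⟩
      have : y = r0 i := by rw [hi]
      rw [map_mul, hr0, hφk, this, hr0, hj])
  have hπ : ∀ y : f.rootSet L, ∃ y' : f.rootSet L, (y' : L) * kap k L lam = σ y := by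
    intro y
    obtain ⟨i, rfl⟩ := hsurj y
    obtain ⟨j, hj⟩ := ks i
    refine ⟨r0 j, hφi ?_⟩
    rw [map_mul, hr0, hφk, hσ, hr0, hj, mul_comm]
  choose π0 hπ0 using hπ
  have hπi : Function.Injective π0 := by
    intro y y' h
    apply Subtype.ext
    apply σ.injective
    rw [← hπ0, ← hπ0, h]
  refine ⟨σ, Equiv.ofBijective π0 (Finite.injective_iff_bijective.1 hπi), ?_, ?_, hπ0, ?_⟩
  · intro c
    apply hφi
    rw [hσ, hφk, hkE, e3, rescC]
  · apply hφi
    rw [hσ, map_mul, hφk, hφx, hxE, hkE, e3, PowerSeries.rescale_X, map_mul]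
  · intro i j hij m
    have h1 : π0 (r0 i) = r0 j := hij
    have h2 := congrArg φ (hπ0 (r0 i))
    rw [h1, map_mul, hr0, hφk, hσ, hr0, hkE, e3, ← map_mul] at h2
    have h3 := congrArg (PowerSeries.coeff m) (hoE h2)
    rw [PowerSeries.coeff_mul_C, PowerSeries.coeff_rescale] at h3
    rw [← h3, mul_comm]
end
end Abh

namespace Abh
open Equiv

/-- extended symmetry data -/
def Q {k : Type*} [Field k] {f : (RatFunc k)[X]} {L : Type*} [Field L] [Algebra (RatFunc k) L]
    (π : Perm (f.rootSet L)) (μ lam : k) : Prop :=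
  μ ≠ 0 ∧ lam ≠ 0 ∧ ∃ σ : L ≃+* L, (∀ c, σ (kap k L c) = kap k L c) ∧
          σ (xx k L) = kap k L μ * xx k L ∧ (∀ y, (π y : L) * kap k L lam = σ y)

section
variable {k : Type*} [Field k] {f : (RatFunc k)[X]} {L : Type*} [Field L] [Algebra (RatFunc k) L]

theorem Q.mul {π π' : Perm (f.rootSet L)} {μ lam μ' lam' : k} (h : Q π μ lam) (h' : Q π' μ' lam') :
    Q (π * π') (μ * μ') (lam * lam') := by
  obtain ⟨h1, h2, σ, h3, h4, h5⟩ := h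
  obtain ⟨h1', h2', σ', h3', h4', h5'⟩ := h'
  refine ⟨mul_ne_zero h1 h1', mul_ne_zero h2 h2', σ'.trans σ, ?_, ?_, ?_⟩
  · intro c; simp [h3, h3']
  · simp [h3, h4, h4']; ring
  · intro y
    have := h5 (π' y)
    rw [RingEquiv.trans_apply, ← h5', map_mul σ, h3, ← this, map_mul (kap k L), Perm.mul_apply]; ring

theorem Q.inv {π : Perm (f.rootSet L)} {μ lam : k} (h : Q π μ lam) : Q π⁻¹ μ⁻¹ lam⁻¹ := by
  obtain ⟨h1, h2, σ, h3, h4, h5⟩ := h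
  have h1' : kap k L μ ≠ 0 := by simpa using h1
  have h2' : kap k L lam ≠ 0 := by simpa using h2
  refine ⟨inv_ne_zero h1, inv_ne_zero h2, σ.symm, ?_, ?_, ?_⟩
  · intro c; rw [RingEquiv.symm_apply_eq, h3]
  · rw [RingEquiv.symm_apply_eq, map_mul, h3, h4, map_inv₀, inv_mul_cancel_left₀ h1']
  · intro y
    symm
    rw [RingEquiv.symm_apply_eq, map_mul, h3, ← h5]
    simp [h2']

theorem Q.one : Q (1 : Perm (f.rootSet L)) (1 : k) 1 :=
  ⟨one_ne_zero, one_ne_zero, RingEquiv.refl L, by simp, by simp, by simp⟩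

variable (f L) in
/-- extended group -/
def Gh : Subgroup (Perm (f.rootSet L)) where
  carrier := {π | ∃ μ lam : k, Q π μ lam}
  mul_mem' := by
    rintro _ _ ⟨_, _, h⟩ ⟨_, _, h'⟩
    exact ⟨_, _, h.mul h'⟩
  one_mem' := ⟨_, _, Q.one⟩
  inv_mem' := by
    rintro _ ⟨_, _, h⟩
    exact ⟨_, _, h.inv⟩

theorem Q.mem [Fact ((f.map (algebraMap (RatFunc k) L)).Splits)] {π : Perm (f.rootSet L)}
    (h : Q π (1:k) 1) : π ∈ (Polynomial.Gal.galActionHom f L).range := by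
  obtain ⟨-, -, σ, h3, h4, h5⟩ := h
  have hp : ∀ p : k[X], σ (algebraMap (RatFunc k) L (algebraMap k[X] (RatFunc k) p)) =
      algebraMap (RatFunc k) L (algebraMap k[X] (RatFunc k) p) := by
    intro p
    induction p using Polynomial.induction_on' with
    | add p q hp hq => simp only [map_add, hp, hq]
    | monomial m c =>
      have h3' : σ (algebraMap (RatFunc k) L (RatFunc.C c)) = algebraMap (RatFunc k) L (RatFunc.C c) := by
        have := h3 c
        rwa [kap, RingHom.comp_apply, RatFunc.algebraMap_eq_C] at this
      have h4' : σ (algebraMap (RatFunc k) L RatFunc.X) = algebraMap (RatFunc k) L RatFunc.X := by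
        rw [map_one, one_mul] at h4
        exact h4
      rw [← C_mul_X_pow_eq_monomial, map_mul, map_pow, RatFunc.algebraMap_C, RatFunc.algebraMap_X]
      simp only [map_mul, map_pow, h3', h4']
  have hq : ∀ q : RatFunc k, σ (algebraMap (RatFunc k) L q) = algebraMap (RatFunc k) L q := by
    intro q
    induction q using RatFunc.induction_on with
    | f p q hq => simp only [map_div₀, hp]
  refine ⟨Polynomial.Gal.restrict f L (AlgEquiv.ofRingEquiv (f := σ) hq), ?_⟩
  ext y
  rw [Polynomial.Gal.galActionHom_restrict]
  have := h5 y
  rw [map_one, mul_one] at this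
  rw [this]; rfl

theorem range_ex [Fact ((f.map (algebraMap (RatFunc k) L)).Splits)] [IsSplittingField (RatFunc k) L f]
    {π : Perm (f.rootSet L)} (h : π ∈ (Polynomial.Gal.galActionHom f L).range) :
    ∃ ϕ : L ≃ₐ[RatFunc k] L, ∀ y, (π y : L) = ϕ y := by
  obtain ⟨g, rfl⟩ := h
  have : Normal (RatFunc k) L := Normal.of_isSplittingField f
  obtain ⟨ϕ, rfl⟩ := Polynomial.Gal.restrict_surjective f L g
  exact ⟨ϕ, fun y => Polynomial.Gal.galActionHom_restrict f L ϕ y⟩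

theorem range_le [Fact ((f.map (algebraMap (RatFunc k) L)).Splits)] [IsSplittingField (RatFunc k) L f] :
    (Polynomial.Gal.galActionHom f L).range ≤ Gh f L := by
  intro π h
  obtain ⟨ϕ, hϕ⟩ := range_ex h
  refine ⟨1, 1, one_ne_zero, one_ne_zero, ϕ.toRingEquiv, ?_, ?_, ?_⟩
  · intro c; exact ϕ.commutes _
  · rw [map_one, one_mul]; exact ϕ.commutes _
  · intro y; rw [map_one, mul_one, hϕ]; rfl

theorem comm_le [Fact ((f.map (algebraMap (RatFunc k) L)).Splits)] :
    ⁅Gh f L, Gh f L⁆ ≤ (Polynomial.Gal.galActionHom f L).range := by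
  rw [Subgroup.commutator_le]
  rintro g ⟨μ, lam, h⟩ g' ⟨μ', lam', h'⟩
  have := ((h.mul h').mul h.inv).mul h'.inv
  apply Q.mem
  obtain ⟨h1, h2, -⟩ := h
  obtain ⟨h1', h2', -⟩ := h'
  rw [commutatorElement_def]
  convert this using 1 <;> field_simp
end

theorem gt' {Ω : Type*} [Fintype Ω] [DecidableEq Ω] (G : Subgroup (Perm Ω)) (A B : Finset Ω)
    (hAB : ∀ x, x ∈ B ↔ x ∉ A) (h2 : 2 ≤ A.card)
    (hlt : A.card < B.card) (hco : Nat.Coprime A.card B.card)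
    (htr : ∀ x y, ∃ g ∈ G, g x = y)
    (hα : ∀ x ∈ A, ∀ y ∈ A, ∃ g ∈ G, (∀ z ∈ B, g z = z) ∧ g x = y)
    (hβ : ∀ x ∈ B, ∀ y ∈ B, ∃ g ∈ G, (∀ z ∈ A, g z = z) ∧ g x = y) :
    alternatingGroup Ω ≤ G := by
  simp only [hAB] at hα hβ
  convert gt G A h2 ?_ ?_ htr hα hβ
  · convert hlt using 2; ext x; simp [hAB]
  · convert hco using 2; ext x; simp [hAB]

theorem altle {k : Type*} [Field k] [IsAlgClosed k] (n t e : ℕ) (he : 0 < e) (ht : 1 < t) (htn : t + 3 < n)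
    (hco : Nat.gcd n t = 1)
    (a : k) (ha : a ≠ 0) (htk : (t : k) ≠ 0) (hntk : ((n - t : ℕ) : k) ≠ 0) (f : (RatFunc k)[X])
    (hf : f = X ^ n - C (algebraMap k (RatFunc k) a) * X ^ t + C (RatFunc.X ^ (t * e)))
    (L : Type*) [Field L] [Algebra (RatFunc k) L] [IsSplittingField (RatFunc k) L f]
    [Fact ((f.map (algebraMap (RatFunc k) L)).Splits)] :
    Fintype.card (f.rootSet L) = n ∧
    alternatingGroup (f.rootSet L) ≤ (Polynomial.Gal.galActionHom f L).range := by
  obtain ⟨T1, T2, ρ, r, hT1, hT2, hw, hb, hA, hB, H⟩ := mainS n t e he (by omega) (by omega) a ha htk hntk f hf L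
  have hcard : Fintype.card (f.rootSet L) = n := by
    rw [← Fintype.card_congr r]; simp [hT1, hT2]; omega
  refine ⟨hcard, ?_⟩
  have hb0 : ∀ b : T2, b.1 ≠ 0 := by
    intro b h
    have := hb b b.2
    rw [h, zero_pow (by omega)] at this
    exact ha this.symm
  have hw0 : ∀ w : T1, w.1 ≠ 0 := by
    intro b h
    have := hw b b.2
    rw [h, zero_pow (by omega)] at this
    simp at this
  -- action on labels
  have act : ∀ μ lam : k, lam ≠ 0 → lam ^ (n - t) = 1 → μ ^ e ≠ 0 → (μ ^ e) ^ t = lam ^ t → 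
      ∃ π ∈ Gh f L, (∀ w : T1, ∃ w' : T1, π (r (.inl w)) = r (.inl w') ∧ lam * w' = μ ^ e * w) ∧
       (∀ b : T2, ∃ b' : T2, π (r (.inr b)) = r (.inr b') ∧ lam * b' = b) := by
    intro μ lam hl hl1 hμe hl2
    have hμ : μ ≠ 0 := by rintro rfl; exact hμe (zero_pow he.ne')
    obtain ⟨σ, π, h1, h2, h3, h4⟩ := H μ lam hμ hl hl1 (by rw [mul_comm, pow_mul, hl2])
    refine ⟨π, ⟨μ, lam, hμ, hl, σ, h1, h2, h3⟩, ?_, ?_⟩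
    · intro w
      obtain ⟨j, hj⟩ := r.surjective (π (r (.inl w)))
      have h5 := h4 _ _ hj.symm
      have h6 := h5 0
      rw [PowerSeries.coeff_zero_eq_constantCoeff_apply, PowerSeries.coeff_zero_eq_constantCoeff_apply,
        (hA w).1, mul_zero] at h6
      rcases j with w' | b
      · refine ⟨w', hj.symm, ?_⟩
        have h7 := h5 e
        rwa [(hA w).2, (hA w').2] at h7
      · rw [hB] at h6
        exact absurd h6 (mul_ne_zero hl (hb0 b))
    · intro b
      obtain ⟨j, hj⟩ := r.surjective (π (r (.inr b)))
      have h5 := h4 _ _ hj.symm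
      have h6 := h5 0
      rw [PowerSeries.coeff_zero_eq_constantCoeff_apply, PowerSeries.coeff_zero_eq_constantCoeff_apply,
        hB, pow_zero, one_mul] at h6
      rcases j with w' | b'
      · rw [(hA w').1, mul_zero] at h6
        exact absurd h6.symm (hb0 b)
      · rw [hB] at h6
        exact ⟨b', hj.symm, h6⟩
  have tA : ∀ w w' : T1, ∃ g ∈ Gh f L, (∀ b, g (r (.inr b)) = r (.inr b)) ∧ g (r (.inl w)) = r (.inl w') := by
    intro w w'
    obtain ⟨μ, hμ⟩ := IsAlgClosed.exists_pow_nat_eq (w'.1 / w.1) he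
    have h1 : (w'.1 / w.1) ^ t = 1 := by
      have e1 := hw w w.2
      have e2 := hw w' w'.2
      rw [div_pow, div_eq_one_iff_eq (pow_ne_zero _ (hw0 w))]
      exact mul_left_cancel₀ ha (e2.trans e1.symm)
    obtain ⟨π, hπ, p1, p2⟩ := act μ 1 one_ne_zero (one_pow _)
      (by rw [hμ]; exact div_ne_zero (hw0 _) (hw0 _)) (by rw [hμ, h1, one_pow])
    refine ⟨π, hπ, ?_, ?_⟩
    · intro b
      obtain ⟨b', h, h'⟩ := p2 b
      rw [one_mul] at h'
      rw [h, Subtype.ext h']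
    · obtain ⟨w'', h, h'⟩ := p1 w
      rw [one_mul, hμ, div_mul_cancel₀ _ (hw0 w)] at h'
      rw [h, Subtype.ext h']
  have tB : ∀ b b' : T2, ∃ g ∈ Gh f L, (∀ w, g (r (.inl w)) = r (.inl w)) ∧ g (r (.inr b)) = r (.inr b') := by
    intro b b'
    obtain ⟨μ, hμ⟩ := IsAlgClosed.exists_pow_nat_eq (b.1 / b'.1) he
    have h0 : b.1 / b'.1 ≠ 0 := div_ne_zero (hb0 _) (hb0 _)
    obtain ⟨π, hπ, p1, p2⟩ := act μ (b.1 / b'.1) h0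
      (by rw [div_pow, hb b b.2, hb b' b'.2, div_self ha])
      (by rwa [hμ]) (by rw [hμ])
    refine ⟨π, hπ, ?_, ?_⟩
    · intro w
      obtain ⟨w', h, h'⟩ := p1 w
      rw [hμ] at h'
      rw [h, Subtype.ext (mul_left_cancel₀ h0 h')]
    · obtain ⟨b'', h, h'⟩ := p2 b
      have : b''.1 = b'.1 := by
        apply mul_left_cancel₀ h0
        rw [h', div_mul_cancel₀ _ (hb0 b')]
      rw [h, Subtype.ext this]
  have htr : ∀ x y, ∃ g ∈ Gh f L, g x = y := by
    obtain ⟨b, hb⟩ := IsAlgClosed.exists_pow_nat_eq a (show 0 < n - t by omega)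
    have hirr : Irreducible f := by
      rw [hf]
      exact irr n (t * e) t (Nat.mul_pos (by omega) he) (by omega) a b ha hb hntk
    have := Polynomial.Gal.galAction_isPretransitive f L hirr
    intro x y
    obtain ⟨g, hg⟩ := MulAction.exists_smul_eq f.Gal x y
    exact ⟨_, range_le ⟨g, rfl⟩, hg⟩
  let A : Finset (f.rootSet L) := Finset.univ.map ((Function.Embedding.inl).trans r.toEmbedding)
  have hAc : A.card = t := by simp [A, hT1]
  let B : Finset (f.rootSet L) := Finset.univ.map ((Function.Embedding.inr).trans r.toEmbedding)
  have hBc : B.card = n - t := by simp [B, hT2]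
  have mA : ∀ w, r (.inl w) ∈ A := fun w => by simp [A]
  have mB : ∀ b, r (.inr b) ∉ A := fun b => by simp [A]
  have hcs : ∀ y, (∃ w, y = r (.inl w)) ∨ ∃ b, y = r (.inr b) := by
    intro y
    obtain ⟨i | i, rfl⟩ := r.surjective y
    · exact Or.inl ⟨i, rfl⟩
    · exact Or.inr ⟨i, rfl⟩
  have hα : ∀ x ∈ A, ∀ y ∈ A, ∃ g ∈ Gh f L, (∀ z ∉ A, g z = z) ∧ g x = y := by
    intro x hx y hy
    rcases hcs x with ⟨w, rfl⟩ | ⟨b, rfl⟩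
    · rcases hcs y with ⟨w', rfl⟩ | ⟨b, rfl⟩
      · obtain ⟨g, hg, h1, h2⟩ := tA w w'
        refine ⟨g, hg, ?_, h2⟩
        intro z hz
        rcases hcs z with ⟨w, rfl⟩ | ⟨b, rfl⟩
        · exact absurd (mA w) hz
        · exact h1 b
      · exact absurd hy (mB b)
    · exact absurd hx (mB b)
  have hβ : ∀ x ∉ A, ∀ y ∉ A, ∃ g ∈ Gh f L, (∀ z ∈ A, g z = z) ∧ g x = y := by
    intro x hx y hy
    rcases hcs x with ⟨w, rfl⟩ | ⟨b, rfl⟩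
    · exact absurd (mA w) hx
    · rcases hcs y with ⟨w', rfl⟩ | ⟨b', rfl⟩
      · exact absurd (mA w') hy
      · obtain ⟨g, hg, h1, h2⟩ := tB b b'
        refine ⟨g, hg, ?_, h2⟩
        intro z hz
        rcases hcs z with ⟨w, rfl⟩ | ⟨b, rfl⟩
        · exact h1 w
        · exact absurd hz (mB b)
  have hcop : Nat.Coprime t (n - t) := by
    have : Nat.Coprime n t := hco
    exact ((Nat.coprime_sub_self_left (by omega : t ≤ n)).2 this).symm
  have hAB : ∀ x, x ∈ B ↔ x ∉ A := by
    intro x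
    rcases hcs x with ⟨w, rfl⟩ | ⟨b, rfl⟩ <;> simp [A, B]
  have hle : alternatingGroup (f.rootSet L) ≤ Gh f L := by
    rcases lt_trichotomy t (n - t) with h | h | h
    · exact gt' (Gh f L) A B hAB (by omega) (by omega) (by rwa [hAc, hBc]) htr
        (by simpa only [hAB] using hα) (by simpa only [hAB] using hβ)
    · rw [← h, Nat.coprime_self] at hcop
      omega
    · exact gt' (Gh f L) B A (fun x => by rw [hAB, not_not]) (by omega) (by omega)
        (by rw [hAc, hBc]; exact hcop.symm) htr
        (by simpa only [hAB] using hβ) (by simpa only [hAB] using hα)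
  calc alternatingGroup (f.rootSet L) = ⁅alternatingGroup (f.rootSet L), alternatingGroup (f.rootSet L)⁆ :=
        (commutator_alternatingGroup_eq_self (by rw [Nat.card_eq_fintype_card, hcard]; omega)).symm
    _ ≤ ⁅Gh f L, Gh f L⁆ := Subgroup.commutator_mono hle hle
    _ ≤ _ := comm_le

theorem lealt {k : Type*} [Field k] [IsAlgClosed k] (n t s : ℕ) (ht : 0 < t) (htn : t < n)
    (hts : t ∣ s) (h2 : (2 : k) ≠ 0) (hn : (n : k) = 0) (a : k) (f : (RatFunc k)[X])
    (hf : f = X ^ n - C (algebraMap k (RatFunc k) a) * X ^ t + C (RatFunc.X ^ s))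
    (L : Type*) [Field L] [Algebra (RatFunc k) L] [IsSplittingField (RatFunc k) L f]
    [Fact ((f.map (algebraMap (RatFunc k) L)).Splits)] (hcard : Fintype.card (f.rootSet L) = n) :
    (Polynomial.Gal.galActionHom f L).range ≤ alternatingGroup (f.rootSet L) := by
  intro π hπ
  obtain ⟨ϕ, hϕ⟩ := range_ex hπ
  rw [Equiv.Perm.mem_alternatingGroup]
  suffices h : @Equiv.Perm.sign _ (fun a b => Classical.propDecidable (a = b)) _ π = 1 by
    convert h
  refine sgn2 (k := k) (L := L) ?_ (kap k L) (fun y : f.rootSet L => (y : L)) Subtype.val_injective π ϕ.toRingEquiv.toRingHom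
    (fun y => (hϕ y).symm) (fun c => ϕ.commutes _) (xx k L) (ϕ.commutes _) a n s t hcard (by omega) ht hn ?_ ?_
  · have := (map_ne_zero (kap k L)).2 h2
    rwa [map_ofNat] at this
  · rcases Nat.even_or_odd t with h | h
    · obtain ⟨u, rfl⟩ := hts
      exact (h.mul_right u).mul_right _
    · exact (Nat.Odd.sub_odd h odd_one).mul_left _
  · rw [← mapF hf]
    symm
    apply prodRoots
    · rw [mapF hf]; exact monicTri n t htn _ _
    · exact Subtype.val_injective
    · rw [mapF hf, degTri n t htn, hcard]
    · intro i
      have := (memRoot htn hf i.1).1 i.2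
      rw [mapF hf]
      simpa using this
end Abh

/-- Abhyankar: over an algebraically closed field `k` of odd characteristic
`p`, for positive integers `n, s, t` with `gcd(n,t) = 1`, `p ∣ n`, `t ∣ s`
and `1 < t < n - 3`, the polynomial `Y^n - a·Y^t + X^s` over `k(X)` has `n`
distinct roots in its splitting field, and the image of its Galois group in
the permutation group of the set of roots is exactly the alternating group
on those roots. -/
theorem stmt_6 (p : ℕ) (hp : p.Prime) (hodd : Odd p)
    (k : Type*) [Field k] [IsAlgClosed k] [CharP k p]
    (n s t : ℕ) (hn : 0 < n) (hs : 0 < s) (ht1 : 1 < t)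
    (hco : Nat.gcd n t = 1) (hpn : p ∣ n) (hts : t ∣ s) (htn : t + 3 < n)
    (a : k) (ha : a ≠ 0)
    (f : Polynomial (RatFunc k))
    (hf : f = X ^ n - C (algebraMap k (RatFunc k) a) * X ^ t + C (RatFunc.X ^ s)) :
    haveI : Fact ((f.map (algebraMap (RatFunc k) f.SplittingField)).Splits) :=
      ⟨SplittingField.splits f⟩
    Fintype.card (f.rootSet f.SplittingField) = n ∧
      (Polynomial.Gal.galActionHom f f.SplittingField).range =
        alternatingGroup (f.rootSet f.SplittingField) := by
  haveI : Fact ((f.map (algebraMap (RatFunc k) f.SplittingField)).Splits) :=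
      ⟨SplittingField.splits f⟩
  obtain ⟨e, rfl⟩ := id hts
  have he : 0 < e := Nat.pos_of_mul_pos_left hs
  have hnk : (n : k) = 0 := (CharP.cast_eq_zero_iff k p n).2 hpn
  have htk : (t : k) ≠ 0 := by
    intro h
    rw [CharP.cast_eq_zero_iff k p t] at h
    have := Nat.dvd_gcd hpn h
    rw [hco] at this
    exact hp.one_lt.ne' (Nat.dvd_one.1 this)
  have hntk : ((n - t : ℕ) : k) ≠ 0 := by
    rw [Nat.cast_sub (by omega), hnk, zero_sub]
    exact neg_ne_zero.2 htk
  have h2 : (2 : k) ≠ 0 := by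
    intro h
    have h' : ((2 : ℕ) : k) = 0 := by exact_mod_cast h
    rw [CharP.cast_eq_zero_iff k p 2, Nat.dvd_prime Nat.prime_two] at h'
    rcases h' with h' | h'
    · exact hp.one_lt.ne' h'
    · rw [h'] at hodd
      exact absurd hodd (by decide)
  have h1 := Abh.altle n t e he ht1 htn hco a ha htk hntk f hf f.SplittingField
  have h3 := Abh.lealt n t (t * e) (by omega) (by omega) hts h2 hnk a f hf f.SplittingField h1.1
  exact ⟨h1.1, le_antisymm h3 h1.2⟩
end

section
/- Let k be an algebraically closed field of odd characteristic p with p ≠ 11 and p ≠ 23, let a be a nonzero element of k, and let n, s, t be positive integers with gcd(n,t) = 1, p dividing n, t dividing s, and 1 < t = n - 3. Then the polynomial f = Y^n - a·Y^t + X^s over the rational function field k(X) has n distinct roots in a splitting field, and the image of its Galois group in the group of permutations of this set of roots is exactly the alternating group on those n roots. -/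
open Polynomial

open scoped Classical



theorem hens {k : Type*} [Field k] (n i j m : ℕ) (hij : i + j = n) (hi : (i : k) ≠ 0)
   (hi0 : 0 < i) (hj0 : 0 < j) (hm : 0 < m)
   (hn : (n : k) = 0) (a b : k) (hb : b ≠ 0) (hab : b ^ j = a) :
   ∃ y : PowerSeries k, y ^ n - PowerSeries.C a * y ^ i + (PowerSeries.X ^ m) ^ i = 0 ∧
     PowerSeries.constantCoeff y = b := by
  have hen : HenselianRing (PowerSeries k) (Ideal.span {PowerSeries.X}) := inferInstance
  have hI : ∀ z : PowerSeries k, z ∈ Ideal.span {(PowerSeries.X : PowerSeries k)} ↔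
      PowerSeries.constantCoeff z = 0 := by
    intro z
    rw [Ideal.mem_span_singleton, PowerSeries.X_dvd_iff]
  have hn0 : 0 < n := by omega
  have hmon : (X ^ n + (- C (PowerSeries.C a) * X ^ i + C ((PowerSeries.X ^ m) ^ i)) : (PowerSeries k)[X]).Monic := by
    apply monic_X_pow_add
    refine lt_of_le_of_lt (b := (i : WithBot ℕ)) ?_ (by exact_mod_cast (by omega))
    rw [← C_neg]
    compute_degree
    exact le_refl _
  obtain ⟨y, hy, hyb⟩ := hen.is_henselian _ hmon (PowerSeries.C b) (by
    rw [hI]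
    simp [hm.ne', hi0.ne', ← hab, ← hij]
    ring) (by
    have : PowerSeries.constantCoeff (derivative (X ^ n + (- C (PowerSeries.C a) * X ^ i + C ((PowerSeries.X ^ m) ^ i)) : (PowerSeries k)[X]) |>.eval (PowerSeries.C b)) ≠ 0 := by
      rw [← C_neg]
      simp only [derivative_add, derivative_C, derivative_C_mul, derivative_X_pow]
      have ha : a ≠ 0 := by rw [← hab]; exact pow_ne_zero _ hb
      simp [hn, hi, hb, ha]
    apply IsUnit.map
    rw [PowerSeries.isUnit_iff_constantCoeff]
    exact this.isUnit)
  refine ⟨y, ?_, ?_⟩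
  · have : eval y _ = 0 := hy
    simp at this
    rw [← this]; ring
  · rw [hI] at hyb
    simpa [sub_eq_zero] using hyb

theorem hens_uniq {k : Type*} [Field k] (n i j m : ℕ) (hij : i + j = n) (hi : (i : k) ≠ 0)
   (hn : (n : k) = 0) (a b : k) (hb : b ≠ 0) (ha : a ≠ 0) (y z w: PowerSeries k)
   (hy : y ^ n - PowerSeries.C a * y ^ i + w = 0) (hz : z ^ n - PowerSeries.C a * z ^ i + w = 0)
   (hyb : PowerSeries.constantCoeff y = b) (hzb : PowerSeries.constantCoeff z = b) : y = z := by
  have h1 := Commute.geom_sum₂_mul (Commute.all y z) n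
  have h2 := Commute.geom_sum₂_mul (Commute.all y z) i
  set Q1 := ∑ l ∈ Finset.range n, y ^ l * z ^ (n - 1 - l) with hQ1
  set Q2 := ∑ l ∈ Finset.range i, y ^ l * z ^ (i - 1 - l) with hQ2
  have key : (Q1 - PowerSeries.C a * Q2) * (y - z) = 0 := by
    linear_combination h1 - PowerSeries.C a * h2 + hy - hz
  have e1 : ∀ r : ℕ, PowerSeries.constantCoeff (∑ l ∈ Finset.range r, y ^ l * z ^ (r - 1 - l)) = r * b ^ (r-1) := by
    intro r
    rw [map_sum]
    simp only [map_mul, map_pow, hyb, hzb]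
    rw [Finset.sum_congr rfl (g := fun _ => b ^ (r-1))]
    · simp
    · intro l hl
      rw [← pow_add]; congr 1; simp at hl; omega
  rcases mul_eq_zero.1 key with h | h
  · exfalso
    have := congrArg PowerSeries.constantCoeff h
    rw [map_sub, map_mul, hQ1, hQ2, e1, e1] at this
    simp [hn, hi, hb, ha] at this
  · exact sub_eq_zero.1 h

theorem grp {α : Type*} [Fintype α] [DecidableEq α] (S : Finset α) (hS : S.card = 3)
   (h3 : ¬ 3 ∣ Fintype.card α) (h5 : 5 ≤ Fintype.card α)
   (G : Subgroup (Equiv.Perm α)) (hG : G ≤ alternatingGroup α)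
   (τ : Equiv.Perm α) (hτ : τ ∈ Subgroup.normalizer (G : Set (Equiv.Perm α))) (hτS : τ.support = S)
   (hc : ∀ b b', b ∉ S → b' ∉ S → ∃ g ∈ Subgroup.normalizer (G : Set (Equiv.Perm α)), g b = b' ∧ ∀ x ∈ S, g x = x)
   (hm : ∃ g ∈ G, ∃ x ∈ S, g x ∉ S) : G = alternatingGroup α := by
  set N := Subgroup.normalizer (G : Set (Equiv.Perm α)) with hN
  have hGN : G ≤ N := Subgroup.le_normalizer
  have h3c : τ.IsThreeCycle := by rw [← card_support_eq_three_iff, hτS, hS]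
  obtain ⟨g0, hg0, x0, hx0, hgx0⟩ := hm
  have htS : ∀ x ∈ S, ∀ y ∈ S, ∃ g ∈ Subgroup.zpowers τ, g x = y := by
    intro x hx y hy
    rw [← hτS, Equiv.Perm.mem_support] at hx hy
    obtain ⟨i, hi⟩ := h3c.isCycle.exists_zpow_eq hx hy
    exact ⟨τ ^ i, ⟨i, rfl⟩, hi⟩
  have hzN : Subgroup.zpowers τ ≤ N := by simpa using hτ
  have hreach : ∀ y, ∃ g ∈ N, g x0 = y := by
    intro y
    by_cases hy : y ∈ S
    · obtain ⟨g, hg, h⟩ := htS x0 hx0 y hy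
      exact ⟨g, hzN hg, h⟩
    · obtain ⟨g, hg, h, -⟩ := hc _ y hgx0 hy
      exact ⟨g * g0, N.mul_mem hg (hGN hg0), by simpa using h⟩
  have htrans : MulAction.IsPretransitive N α := by
    constructor
    intro x y
    obtain ⟨g, hg, rfl⟩ := hreach x
    obtain ⟨g', hg', rfl⟩ := hreach y
    refine ⟨⟨g', hg'⟩ * (⟨g, hg⟩ : N)⁻¹, ?_⟩
    simp [Subgroup.smul_def]
  have hprim : MulAction.IsPreprimitive N α := by
    refine MulAction.IsPreprimitive.of_isTrivialBlock_base x0 ?_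
    intro B hxB hB
    have hcl : ∀ g ∈ N, ∀ x ∈ B, g x ∈ B → ∀ y ∈ B, g y ∈ B := by
      intro g hg x hx hgx y hy
      have := hB.smul_eq_of_mem (g := (⟨g, hg⟩ : N)) hx hgx
      rw [← this]
      exact Set.smul_mem_smul_set (a := (⟨g, hg⟩ : N)) hy
    by_cases hsub : B.Subsingleton
    · exact Or.inl hsub
    right
    rw [Set.not_subsingleton_iff] at hsub
    obtain ⟨y, hyB, hyx⟩ := hsub.exists_ne x0
    have hSB : ∀ z ∈ S, z ∈ B := by
      intro z hz
      by_cases hy : y ∈ S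
      · obtain ⟨g, hg, hgx⟩ := htS x0 hx0 y hy
        have hgyB : g y ∈ B := hcl g (hzN hg) x0 hxB (by rwa [hgx]) y hyB
        have hg3 : g ^ 3 = 1 := by
          obtain ⟨i, rfl⟩ := hg
          have : τ ^ 3 = 1 := by rw [← h3c.orderOf]; exact pow_orderOf_eq_one τ
          calc (τ ^ i) ^ 3 = (τ ^ 3) ^ i := by rw [← zpow_natCast, ← zpow_natCast, ← zpow_mul, ← zpow_mul, mul_comm]
            _ = 1 := by rw [this, one_zpow]
        have hg3x : g (g (g x0)) = x0 := by
          have := congrArg (fun h : Equiv.Perm α => h x0) hg3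
          simpa [pow_succ] using this
        have hgyS : g y ∈ S := by
          rw [← hτS] at hy ⊢
          obtain ⟨i, rfl⟩ := hg
          exact Equiv.Perm.zpow_apply_mem_support.2 hy
        have h1 : g y ≠ y := by
          intro h; apply hyx; apply g.injective; rw [h, hgx]
        have h2 : g y ≠ x0 := by
          intro h; rw [hgx, h, hgx] at hg3x; exact hyx hg3x
        by_contra hzB
        have hsub4 : ({x0, y, g y, z} : Finset α) ⊆ S := by
          intro v hv
          simp only [Finset.mem_insert, Finset.mem_singleton] at hv
          rcases hv with rfl | rfl | rfl | rfl <;> assumption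
        have hz1 : x0 ≠ z := fun h => hzB (h ▸ hxB)
        have hz2 : y ≠ z := fun h => hzB (h ▸ hyB)
        have hz3 : g y ≠ z := fun h => hzB (h ▸ hgyB)
        have := Finset.card_le_card hsub4
        rw [Finset.card_insert_of_notMem (by simp [hyx.symm, h2.symm, hz1]), Finset.card_insert_of_notMem (by simp [h1.symm, hz2]),
          Finset.card_insert_of_notMem (by simp [hz3]), Finset.card_singleton] at this
        omega
      · obtain ⟨g, hg, rfl⟩ := htS x0 hx0 z hz
        refine hcl g (hzN hg) y hyB ?_ x0 hxB
        have : g y = y := by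
          obtain ⟨i, rfl⟩ := hg
          apply Equiv.Perm.zpow_apply_eq_self_of_apply_eq_self
          rwa [← hτS, Equiv.Perm.notMem_support] at hy
        rwa [this]
    by_cases hBS : ∀ z ∈ B, z ∈ S
    · exfalso
      have : B = S := Set.ext fun z => ⟨hBS z, hSB z⟩
      have hd := hB.ncard_dvd_card ⟨x0, hxB⟩
      rw [this, Set.ncard_coe_finset, hS] at hd
      exact h3 (by simpa using hd)
    · push Not at hBS
      obtain ⟨z, hzB, hzS⟩ := hBS
      ext v
      simp only [Set.mem_univ, iff_true]
      by_cases hv : v ∈ S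
      · exact hSB v hv
      obtain ⟨g, hg, rfl, hgf⟩ := hc z v hzS hv
      exact hcl g hg x0 hxB (by rwa [hgf x0 hx0]) z hzB
  have hle := Equiv.Perm.alternatingGroup_le_of_isPreprimitive_of_isThreeCycle_mem hprim h3c hτ
  have hsimp : IsSimpleGroup (alternatingGroup α) := alternatingGroup.isSimpleGroup (by simpa using h5)
  have hnorm : (G.subgroupOf (alternatingGroup α)).Normal := by
    constructor
    intro x hx g
    rw [Subgroup.mem_subgroupOf] at hx ⊢
    have := hle g.2
    rw [hN, Subgroup.mem_normalizer_iff] at this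
    exact (this _).1 hx
  rcases hnorm.eq_bot_or_eq_top with h | h
  · exfalso
    rw [Subgroup.subgroupOf_eq_bot] at h
    have := h.le_bot ⟨hg0, hG hg0⟩
    rw [Subgroup.mem_bot] at this
    subst this
    exact hgx0 (by simpa using hx0)
  · exact le_antisymm hG (Subgroup.subgroupOf_eq_top.1 h)

theorem liftPhi {K L E : Type*} [Field K] [Field L] [Field E] [Algebra K L] [Algebra K E]
  (ι : L →ₐ[K] E) (R : Set L) (hR : Algebra.adjoin K R = ⊤)
  (Φ : E →+* E) (φ : K →+* K) (hφ : ∀ x, Φ (algebraMap K E x) = algebraMap K E (φ x))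
  (hΦ : ∀ y ∈ R, ∃ x, ι x = Φ (ι y)) : ∃ Ψ : L →+* L, ∀ x, ι (Ψ x) = Φ (ι x) := by
  have h : ∀ x, ∃ z, ι z = Φ (ι x) := by
    let S : Subalgebra K L :=
      { carrier := {x | ∃ z, ι z = Φ (ι x)}
        mul_mem' := by
          rintro a b ⟨z, hz⟩ ⟨w, hw⟩
          exact ⟨z * w, by simp [hz, hw]⟩
        add_mem' := by
          rintro a b ⟨z, hz⟩ ⟨w, hw⟩
          exact ⟨z + w, by simp [hz, hw]⟩
        algebraMap_mem' := by
          intro r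
          exact ⟨algebraMap K L (φ r), by simp [hφ]⟩ }
    have : Algebra.adjoin K R ≤ S := Algebra.adjoin_le hΦ
    rw [hR] at this
    exact fun x => this (Algebra.mem_top)
  choose Ψ hΨ using h
  have hinj := ι.toRingHom.injective
  refine ⟨⟨⟨⟨Ψ, ?_⟩, ?_⟩, ?_, ?_⟩, hΨ⟩
  · apply hinj; simp [hΨ]
  · intro x y; apply hinj; simp [hΨ]
  · apply hinj; simp [hΨ]
  · intro x y; apply hinj; simp [hΨ]

theorem memRange {K : Type*} [Field K] (f : K[X])
  [Fact ((f.map (algebraMap K f.SplittingField)).Splits)] (g : Equiv.Perm (f.rootSet f.SplittingField)) :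
  g ∈ (Polynomial.Gal.galActionHom f f.SplittingField).range ↔
    ∃ σ : f.SplittingField ≃ₐ[K] f.SplittingField, ∀ y, (g y : f.SplittingField) = σ y := by
  constructor
  · rintro ⟨σ, rfl⟩
    obtain ⟨σ, rfl⟩ := Polynomial.Gal.restrict_surjective f f.SplittingField σ
    exact ⟨σ, fun y => Polynomial.Gal.galActionHom_restrict f f.SplittingField σ y⟩
  · rintro ⟨σ, hσ⟩
    refine ⟨Polynomial.Gal.restrict f f.SplittingField σ, ?_⟩
    ext y
    rw [hσ]
    exact Polynomial.Gal.galActionHom_restrict f f.SplittingField σ y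

theorem conjMem {K E : Type*} [Field K] [Field E] [Algebra K E] (f : K[X])
  [Fact ((f.map (algebraMap K f.SplittingField)).Splits)]
  (ι : f.SplittingField →ₐ[K] E)
  (Φ : E ≃+* E) (φ : K ≃+* K) (hφ : ∀ x, Φ (algebraMap K E x) = algebraMap K E (φ x))
  (l : K) (hl : l ≠ 0) (π : Equiv.Perm (f.rootSet f.SplittingField))
  (hπ : ∀ y : f.rootSet f.SplittingField, ι (π y : f.SplittingField) = algebraMap K E l * Φ (ι y)) :
  ∀ g ∈ (Polynomial.Gal.galActionHom f f.SplittingField).range, π⁻¹ * g * π ∈ (Polynomial.Gal.galActionHom f f.SplittingField).range := by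
  intro g hg
  obtain ⟨σ, hσ⟩ := (memRange f g).1 hg
  rw [memRange]
  have hinj := ι.toRingHom.injective
  have hl' : algebraMap K E l ≠ 0 := by simpa using hl
  obtain ⟨Ψ, hΨ⟩ := liftPhi ι (f.rootSet f.SplittingField) (SplittingField.adjoin_rootSet f) Φ.toRingHom φ.toRingHom
    (by simpa using hφ) (by
      intro y hy
      refine ⟨algebraMap K _ l⁻¹ * (π ⟨y, hy⟩ : f.SplittingField), ?_⟩
      rw [map_mul, hπ]
      simp [hl])
  obtain ⟨Ψ', hΨ'⟩ := liftPhi ι (f.rootSet f.SplittingField) (SplittingField.adjoin_rootSet f) Φ.symm.toRingHom φ.symm.toRingHom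
    (by intro x
        apply Φ.injective
        simp [hφ]) (by
      intro y hy
      refine ⟨algebraMap K _ (φ.symm l) * (π⁻¹ ⟨y, hy⟩ : f.rootSet f.SplittingField), ?_⟩
      apply Φ.injective
      have := hπ (π⁻¹ ⟨y, hy⟩)
      have e0 : π (π⁻¹ ⟨y, hy⟩) = ⟨y, hy⟩ := by simp
      rw [e0] at this
      simp only [] at this
      rw [map_mul, map_mul]
      simp [hφ, this])
  have hΨΨ' : ∀ x, Ψ' (Ψ x) = x := by
    intro x
    apply hinj
    show ι _ = ι _
    rw [hΨ', hΨ]; simp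
  have hΨK : ∀ x, Ψ (algebraMap K _ x) = algebraMap K _ (φ x) := by
    intro x; apply hinj
    show ι _ = ι _
    rw [hΨ]; simp [hφ]
  let σ' : f.SplittingField →ₐ[K] f.SplittingField :=
    { (Ψ'.comp ((σ : f.SplittingField ≃ₐ[K] f.SplittingField) : f.SplittingField →+* f.SplittingField)).comp Ψ with
      commutes' := by
        intro r
        have h1 : σ (algebraMap K _ (φ r)) = algebraMap K _ (φ r) := AlgEquiv.commutes _ _
        show Ψ' (σ (Ψ (algebraMap K _ r))) = _
        rw [hΨK, h1, ← hΨK, hΨΨ'] }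
  have hσ' : Function.Bijective σ' := Algebra.IsAlgebraic.algHom_bijective σ'
  have hσ'a : ∀ x, σ' x = Ψ' (σ (Ψ x)) := fun x => rfl
  refine ⟨AlgEquiv.ofBijective σ' hσ', ?_⟩
  intro y
  apply hinj
  apply Φ.injective
  apply mul_left_cancel₀ hl'
  show _ * Φ (ι _) = _ * Φ (ι _)
  rw [← hπ]
  have e1 : π ((π⁻¹ * g * π) y) = g (π y) := by simp
  rw [e1, hσ, AlgEquiv.ofBijective_apply, hσ'a, hΨ']
  have e2 : (π y : f.SplittingField) = algebraMap K _ l * Ψ y := by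
    apply hinj
    show ι _ = ι _
    rw [hπ, map_mul, hΨ]; simp
  rw [e2]
  simp

theorem parity {K L : Type*} [Field K] [Field L] [Algebra K L] (h2 : (2 : K) ≠ 0) (f : K[X]) {n m : ℕ}
  (v : Fin n → L) (hv : Function.Injective v) (hnod : f.map (algebraMap K L) = Lagrange.nodal Finset.univ v)
  (κ d I : K) (hI : I ^ 2 = -1)
  (hder : ∀ i, eval (v i) (derivative (f.map (algebraMap K L))) = algebraMap K L κ * (0 - v i) ^ m)
  (hsq : κ ^ n * (f.coeff 0) ^ m = d ^ 2) (σ : L →ₐ[K] L) (g : Equiv.Perm (Fin n))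
  (hg : ∀ i, σ (v i) = v (g i)) : Equiv.Perm.sign g = 1 := by
  set D := (Matrix.vandermonde v).det with hD
  have hD0 : D ≠ 0 := Matrix.det_vandermonde_ne_zero_iff.2 hv
  have hσD : σ D = (Equiv.Perm.sign g : ℤ) * D := by
    have h1 : σ D = (Matrix.vandermonde (fun i => v (g i))).det := by
      rw [hD, AlgHom.map_det]
      congr 1
      ext i j
      simp [Matrix.vandermonde_apply, hg]
    rw [h1, hD, ← Matrix.det_permute]
    rfl
  have hprod : ∏ i, ∏ j ∈ ({i}ᶜ : Finset (Fin n)), (v i - v j) = algebraMap K L d ^ 2 := by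
    have h1 : ∀ i, ∏ j ∈ ({i}ᶜ : Finset (Fin n)), (v i - v j) = algebraMap K L κ * (0 - v i) ^ m := by
      intro i
      rw [← hder, hnod, Lagrange.eval_nodal_derivative_eval_node_eq (Finset.mem_univ i), Lagrange.eval_nodal]
      apply Finset.prod_congr
      · ext; simp
      · intros; rfl
    rw [Finset.prod_congr rfl (fun i _ => h1 i), Finset.prod_mul_distrib, Finset.prod_pow]
    have h0 : ∏ i, (0 - v i) = algebraMap K L (f.coeff 0) := by
      rw [← Lagrange.eval_nodal, ← hnod, ← coeff_zero_eq_eval_zero, coeff_map]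
    rw [h0, ← map_pow, ← map_pow, ← hsq]
    simp
  have hJ : algebraMap K L I ^ 2 = -1 := by rw [← map_pow, hI]; simp
  have hDsq : ((∏ i : Fin n, ∏ j > i, algebraMap K L I) * D) ^ 2 = algebraMap K L d ^ 2 := by
    rw [← hprod, ← Finset.prod_prod_Ioi_mul_eq_prod_prod_off_diag (fun j i => v i - v j), hD, Matrix.det_vandermonde,
      ← Finset.prod_mul_distrib, ← Finset.prod_pow]
    apply Finset.prod_congr rfl
    intro i _
    rw [← Finset.prod_mul_distrib, ← Finset.prod_pow]
    apply Finset.prod_congr rfl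
    intro j _
    rw [mul_pow, hJ]; ring
  have hfix : σ D = D := by
    have hI0 : (∏ i : Fin n, ∏ j > i, algebraMap K L I) ≠ 0 := by
      refine Finset.prod_ne_zero_iff.2 fun i _ => Finset.prod_ne_zero_iff.2 fun j _ => ?_
      intro h; rw [h] at hJ; norm_num at hJ
    have hfixI : σ (∏ i : Fin n, ∏ j > i, algebraMap K L I) = ∏ i : Fin n, ∏ j > i, algebraMap K L I := by
      simp
    have : σ ((∏ i : Fin n, ∏ j > i, algebraMap K L I) * D) = (∏ i : Fin n, ∏ j > i, algebraMap K L I) * D := by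
      rcases sq_eq_sq_iff_eq_or_eq_neg.1 hDsq with h | h <;> rw [h] <;> simp
    rw [map_mul, hfixI] at this
    exact mul_left_cancel₀ hI0 this
  rcases Int.units_eq_one_or (Equiv.Perm.sign g) with h | h
  · exact h
  · exfalso
    rw [h, hfix] at hσD
    have h2' : (2 : L) ≠ 0 := by
      rw [← map_ofNat (algebraMap K L) 2]
      simpa using h2
    have : (2 : L) * D = 0 := by
      push_cast at hσD
      linear_combination hσD
    simp [h2', hD0] at this

noncomputable abbrev algE (k : Type*) [Field k] : Algebra (RatFunc k) (LaurentSeries k) :=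
  RatFunc.liftAlgebra k (LaurentSeries k)

attribute [local instance] algE

theorem algE_poly {k : Type*} [Field k] (P : k[X]) :
    algebraMap (RatFunc k) (LaurentSeries k) (algebraMap _ _ P) =
      algebraMap (PowerSeries k) (LaurentSeries k) (P : PowerSeries k) :=
  (RatFunc.coe_coe P).symm

theorem scaleE {k : Type*} [Field k] (η : k) (hη : η ≠ 0) :
  ∃ (Φ : LaurentSeries k ≃+* LaurentSeries k) (φ : RatFunc k ≃+* RatFunc k),
   (∀ x, Φ (algebraMap (RatFunc k) (LaurentSeries k) x) = algebraMap (RatFunc k) (LaurentSeries k) (φ x)) ∧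
   (∀ y : PowerSeries k, Φ (algebraMap _ _ y) = algebraMap (PowerSeries k) (LaurentSeries k) (PowerSeries.rescale η y)) := by
  have hr : ∀ c d : k, c * d = 1 → ∀ y, PowerSeries.rescale c (PowerSeries.rescale d y) = y := by
    intro c d hcd y
    ext i
    simp only [PowerSeries.coeff_rescale]
    rw [← mul_assoc, ← mul_pow, hcd]; simp
  let Φ0 : PowerSeries k ≃+* PowerSeries k := RingEquiv.ofRingHom (PowerSeries.rescale η) (PowerSeries.rescale η⁻¹)
    (by ext1 y; exact hr _ _ (mul_inv_cancel₀ hη) y) (by ext1 y; exact hr _ _ (inv_mul_cancel₀ hη) y)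
  let φ0 : k[X] ≃+* k[X] := RingEquiv.ofRingHom (eval₂RingHom C (C η * X)) (eval₂RingHom C (C η⁻¹ * X))
    (by ext1
        · ext; simp
        · simp [← mul_assoc, ← C_mul, hη]) (by
        ext1
        · ext; simp
        · simp [← mul_assoc, ← C_mul, hη])
  refine ⟨IsFractionRing.ringEquivOfRingEquiv Φ0, IsFractionRing.ringEquivOfRingEquiv φ0, ?_, ?_⟩
  · have h2 : ∀ y : PowerSeries k, (IsFractionRing.ringEquivOfRingEquiv Φ0 : LaurentSeries k ≃+* LaurentSeries k) (algebraMap _ _ y) = algebraMap (PowerSeries k) (LaurentSeries k) (PowerSeries.rescale η y) := by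
      intro y
      exact IsFractionRing.ringEquivOfRingEquiv_algebraMap Φ0 y
    have hpoly : ∀ P : k[X], algebraMap (RatFunc k) (LaurentSeries k) (algebraMap _ _ P) = algebraMap (PowerSeries k) (LaurentSeries k) (P : PowerSeries k) := by
      intro P
      exact algE_poly P
    have key : ((IsFractionRing.ringEquivOfRingEquiv Φ0 : LaurentSeries k ≃+* LaurentSeries k).toRingHom.comp (algebraMap (RatFunc k) (LaurentSeries k))) = 
       (algebraMap (RatFunc k) (LaurentSeries k)).comp (IsFractionRing.ringEquivOfRingEquiv φ0 : RatFunc k ≃+* RatFunc k).toRingHom := by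
      apply IsLocalization.ringHom_ext (nonZeroDivisors k[X])
      have hL : ∀ P : k[X], ((IsFractionRing.ringEquivOfRingEquiv Φ0 : LaurentSeries k ≃+* LaurentSeries k) (algebraMap (RatFunc k) (LaurentSeries k) (algebraMap k[X] _ P))) = algebraMap (PowerSeries k) (LaurentSeries k) (PowerSeries.rescale η P) := by
        intro P; rw [hpoly, h2]
      have hR : ∀ P : k[X], algebraMap (RatFunc k) (LaurentSeries k) ((IsFractionRing.ringEquivOfRingEquiv φ0 : RatFunc k ≃+* RatFunc k) (algebraMap k[X] _ P)) = algebraMap (PowerSeries k) (LaurentSeries k) ((φ0 P : k[X]) : PowerSeries k) := by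
        intro P
        rw [← hpoly, IsFractionRing.ringEquivOfRingEquiv_algebraMap]
      ext1
      · ext1 c
        refine (hL (C c)).trans (Eq.trans ?_ (hR (C c)).symm)
        have h1 : φ0 (C c) = C c := by simp [φ0]
        rw [h1]
        congr 1
        ext i
        rcases i with _ | i <;> simp [PowerSeries.coeff_rescale, PowerSeries.coeff_C, Polynomial.coeff_C]
      · refine (hL X).trans (Eq.trans ?_ (hR X).symm)
        simp [φ0, PowerSeries.rescale_X]
    intro x
    exact congrArg (fun h : RatFunc k →+* LaurentSeries k => h x) key
  · intro y
    exact IsFractionRing.ringEquivOfRingEquiv_algebraMap Φ0 y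


theorem noconst {k L : Type*} [Field k] [Field L] [Algebra (RatFunc k) L] (n t s : ℕ) (htn : t + 3 = n) (hs : 0 < s) (ht : 1 < t)
   (a : k) {A : Type*} [Fintype A] [Nonempty A] (y : A → L)
   (hy : ∀ b, y b ^ n - algebraMap (RatFunc k) L (algebraMap k _ a) * y b ^ t + algebraMap (RatFunc k) L (RatFunc.X ^ s) = 0)
   (c : k) (hP : ∏ b, y b = algebraMap (RatFunc k) L (algebraMap k _ c)) : False := by
  let O := (RatFunc.inftyValuation k).valuationSubring
  have hO : ∀ x, x ∈ O ↔ RatFunc.inftyValuation k x ≤ 1 := fun x => Iff.rfl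
  have hk : ∀ c : k, algebraMap k (RatFunc k) c ∈ O := by
    intro c
    rw [hO]
    by_cases hc : c = 0
    · simp [hc]
    · exact (RatFunc.inftyValuation.C k hc).le
  have hX0 : (RatFunc.X : RatFunc k) ≠ 0 := RatFunc.X_ne_zero
  have hXi : ((RatFunc.X : RatFunc k)⁻¹) ∈ O := by
    rw [hO, map_inv₀, RatFunc.inftyValuation.X, ← WithZero.exp_neg]
    rw [← WithZero.exp_zero, WithZero.exp_le_exp]; norm_num
  set ξ := algebraMap (RatFunc k) L RatFunc.X with hξ
  have hξ0 : ξ ≠ 0 := by simpa [hξ] using hX0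
  have hint : ∀ x ∈ O, IsIntegral O (algebraMap (RatFunc k) L x) := by
    intro x hx
    exact isIntegral_algebraMap (R := O) (A := L) (x := ⟨x, hx⟩)
  set α := algebraMap (RatFunc k) L (algebraMap k _ a) with hα
  have hy0 : ∀ b, y b ≠ 0 := by
    intro b h
    have := hy b
    simp [h, show t ≠ 0 by omega, show n ≠ 0 by omega] at this
    exact hX0 this.1
  have hz : ∀ b, IsIntegral O (y b)⁻¹ ∧ (y b)⁻¹ ^ n = (ξ⁻¹) ^ s * (α * (y b)⁻¹ ^ 3 - 1) := by
    intro b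
    have h2 : (y b)⁻¹ ^ n = (ξ⁻¹) ^ s * (α * (y b)⁻¹ ^ 3 - 1) := by
      have := hy b
      rw [map_pow, ← hξ, ← htn] at this
      rw [← htn]
      have h0 := hy0 b
      have e : ξ ^ s = y b ^ t * (α - y b ^ 3) := by linear_combination this
      have e0 : α - y b ^ 3 ≠ 0 := by
        intro h; rw [h, mul_zero] at e; exact pow_ne_zero s hξ0 e
      rw [inv_pow ξ, e, inv_pow, inv_pow, pow_add]
      field_simp
    refine ⟨?_, h2⟩
    have hx1 := hint ((RatFunc.X)⁻¹ ^ s) (pow_mem hXi s)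
    let β : O := ⟨(RatFunc.X)⁻¹ ^ s, pow_mem hXi s⟩
    let γ : O := ⟨algebraMap k _ a, hk a⟩
    refine ⟨X ^ n + (- C (β * γ) * X ^ 3 + C β), ?_, ?_⟩
    · apply monic_X_pow_add
      refine lt_of_le_of_lt (b := ((3 : ℕ) : WithBot ℕ)) ?_ (by exact_mod_cast (by omega))
      rw [← C_neg]
      compute_degree
      exact le_refl _
    · have hβ : algebraMap O L β = ξ⁻¹ ^ s := by
        show algebraMap (RatFunc k) L ((RatFunc.X)⁻¹ ^ s) = _
        rw [map_pow, map_inv₀]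
      have hγ : algebraMap O L γ = α := rfl
      simp only [eval₂_add, eval₂_mul, eval₂_neg, eval₂_X_pow, eval₂_C, map_mul, hβ, hγ]
      rw [h2]; ring
  have hfin : IsIntegral O (algebraMap (RatFunc k) L (RatFunc.X ^ (s * Fintype.card A))) := by
    have e : algebraMap (RatFunc k) L (RatFunc.X ^ (s * Fintype.card A)) =
        algebraMap (RatFunc k) L (algebraMap k _ c) ^ n * ∏ b, (α * (y b)⁻¹ ^ 3 - 1) := by
      have h3 : ∏ b, (y b)⁻¹ ^ n = (ξ⁻¹ ^ s) ^ (Fintype.card A) * ∏ b, (α * (y b)⁻¹ ^ 3 - 1) := by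
        rw [Finset.prod_congr rfl (fun b _ => (hz b).2), Finset.prod_mul_distrib]
        simp
      rw [Finset.prod_pow, Finset.prod_inv_distrib, hP] at h3
      have hc0 : algebraMap (RatFunc k) L (algebraMap k _ c) ≠ 0 := by
        rw [← hP]; exact Finset.prod_ne_zero_iff.2 fun b _ => hy0 b
      rw [map_pow, ← hξ, pow_mul]
      generalize algebraMap (RatFunc k) L (algebraMap k _ c) = C0 at *
      generalize ∏ b, (α * (y b)⁻¹ ^ 3 - 1) = Q at *
      generalize Fintype.card A = N at *
      rw [inv_pow, inv_pow, inv_pow] at h3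
      field_simp at h3
      rw [← h3]
    rw [e]
    refine ((hint _ (hk c)).pow n).mul (IsIntegral.prod _ fun b _ => ?_)
    exact ((hint _ (hk a)).mul ((hz b).1.pow 3)).sub isIntegral_one
  have h1 : IsIntegral O (RatFunc.X ^ (s * Fintype.card A) : RatFunc k) :=
    (isIntegral_algebraMap_iff (algebraMap (RatFunc k) L).injective).1 hfin
  obtain ⟨⟨x, hx⟩, hxe⟩ := IsIntegrallyClosed.isIntegral_iff.1 h1
  change x = _ at hxe
  subst hxe
  rw [hO, map_pow, RatFunc.inftyValuation.X, ← WithZero.exp_nsmul, ← WithZero.exp_zero, WithZero.exp_le_exp] at hx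
  have : 0 < s * Fintype.card A := Nat.mul_pos hs Fintype.card_pos
  simp at hx
  omega

theorem nopres {k L : Type*} [Field k] [Field L] [Algebra (RatFunc k) L] [Algebra k[X] L] [IsScalarTower k[X] (RatFunc k) L]
   (n t s : ℕ) (htn : t + 3 = n) (hs : 0 < s) (ht : 1 < t)
   (a : k) {A B : Type*} [Fintype A] [Nonempty A] [Fintype B] (y : A → L) (v : B → L)
   (hy : ∀ b, y b ^ n - algebraMap (RatFunc k) L (algebraMap k _ a) * y b ^ t + algebraMap (RatFunc k) L (RatFunc.X ^ s) = 0)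
   (hv : ∀ b, v b ^ n - algebraMap (RatFunc k) L (algebraMap k _ a) * v b ^ t + algebraMap (RatFunc k) L (RatFunc.X ^ s) = 0)
   (P Q : RatFunc k) (hP : ∏ b, y b = algebraMap (RatFunc k) L P) (hQ : ∏ b, v b = algebraMap (RatFunc k) L Q)
   (ε : k) (hPQ : P * Q = algebraMap k _ ε * RatFunc.X ^ s) (hε : ε ≠ 0) 
   (hP0 : ∀ q : k[X], algebraMap _ _ q = P → q.coeff 0 ≠ 0) : False := by
  have hint : ∀ x : L, x ^ n - algebraMap (RatFunc k) L (algebraMap k _ a) * x ^ t + algebraMap (RatFunc k) L (RatFunc.X ^ s) = 0 → IsIntegral k[X] x := by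
    intro x hx
    refine ⟨X ^ n + (- C (C a) * X ^ t + C (X ^ s)), ?_, ?_⟩
    · apply monic_X_pow_add
      refine lt_of_le_of_lt (b := (t : WithBot ℕ)) ?_ (by exact_mod_cast (by omega))
      rw [← C_neg]
      compute_degree
      exact le_refl _
    · rw [← hx, IsScalarTower.algebraMap_eq k[X] (RatFunc k) L]
      simp only [eval₂_add, eval₂_mul, eval₂_neg, eval₂_X_pow, eval₂_C, RingHom.comp_apply]
      rw [map_pow (algebraMap k[X] (RatFunc k)), RatFunc.algebraMap_X, RatFunc.algebraMap_C]
      rw [RatFunc.algebraMap_eq_C]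
      ring
  have hpoly : ∀ R : RatFunc k, IsIntegral k[X] (algebraMap (RatFunc k) L R) → ∃ q : k[X], algebraMap _ _ q = R := by
    intro R hR
    exact IsIntegrallyClosed.isIntegral_iff.1 ((isIntegral_algebraMap_iff (algebraMap (RatFunc k) L).injective).1 hR)
  obtain ⟨q, rfl⟩ := hpoly P (hP ▸ IsIntegral.prod _ fun b _ => hint _ (hy b))
  obtain ⟨r, rfl⟩ := hpoly Q (hQ ▸ IsIntegral.prod _ fun b _ => hint _ (hv b))
  have hq0 := hP0 q rfl
  have hqr : q * r = C ε * X ^ s := by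
    apply IsFractionRing.injective k[X] (RatFunc k)
    simpa using hPQ
  have hdvd : q ∣ X ^ s := ⟨C ε⁻¹ * r, by
    rw [mul_left_comm, hqr, ← mul_assoc, ← C_mul, inv_mul_cancel₀ hε]; simp⟩
  obtain ⟨i, hi, hqi⟩ := (dvd_prime_pow prime_X _).1 hdvd
  have hi0 : i = 0 := by
    by_contra h
    have : X ∣ q := (dvd_pow_self X h).trans hqi.symm.dvd
    exact hq0 (X_dvd_iff.1 this)
  subst hi0
  rw [pow_zero, associated_one_iff_isUnit, Polynomial.isUnit_iff] at hqi
  obtain ⟨c, -, rfl⟩ := hqi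
  exact noconst n t s htn hs ht a y hy c (by rw [hP]; simp)

theorem sscale {k : Type*} [Field k] (n i j m : ℕ) (hij : i + j = n) (hi : (i : k) ≠ 0) (hn : (n : k) = 0)
    (a b b' η μ : k) (hb' : b' ≠ 0) (hab : b' ^ j = a) (hbb : b' = μ * b) (hμ : μ ^ j = 1) (hμη : (μ * η ^ m) ^ i = 1)
    (y z : PowerSeries k)
    (hy : y ^ n - PowerSeries.C a * y ^ i + (PowerSeries.X ^ m) ^ i = 0)
    (hz : z ^ n - PowerSeries.C a * z ^ i + (PowerSeries.X ^ m) ^ i = 0)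
    (hyb : PowerSeries.constantCoeff y = b) (hzb : PowerSeries.constantCoeff z = b') :
    z = PowerSeries.C μ * PowerSeries.rescale η y := by
  refine hens_uniq n i j m hij hi hn a b' hb' (by rw [← hab]; exact pow_ne_zero _ hb') z _ ((PowerSeries.X ^ m) ^ i) hz ?_ hzb ?_
  · have h := congrArg (PowerSeries.rescale η) hy
    have hC : PowerSeries.rescale η (PowerSeries.C a) = PowerSeries.C a := by
      ext i
      rcases i with _ | i <;> simp [PowerSeries.coeff_rescale, PowerSeries.coeff_C]
    simp only [map_add, map_sub, map_mul, map_pow, hC, PowerSeries.rescale_X, map_zero] at h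
    have h1 : (PowerSeries.C μ) ^ j = 1 := by rw [← map_pow, hμ, map_one]
    have h2 : (PowerSeries.C μ * PowerSeries.C η ^ m) ^ i = 1 := by rw [← map_pow, ← map_mul, ← map_pow, hμη, map_one]
    rw [mul_pow] at h2
    subst hij
    rw [mul_pow, mul_pow] at h
    rw [mul_pow, mul_pow]
    rw [pow_add (PowerSeries.C μ), h1]
    linear_combination (PowerSeries.C μ) ^ i * h - (PowerSeries.X ^ m) ^ i * h2
  · rw [map_mul, ← PowerSeries.coeff_zero_eq_constantCoeff_apply, ← PowerSeries.coeff_zero_eq_constantCoeff_apply, PowerSeries.coeff_rescale]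
    simp [hyb, hbb]

theorem algE_C {k : Type*} [Field k] (c : k) :
    algebraMap (RatFunc k) (LaurentSeries k) (algebraMap k _ c) =
      algebraMap (PowerSeries k) (LaurentSeries k) (PowerSeries.C c) := by
  have := algE_poly (C c)
  rwa [Polynomial.coe_C, RatFunc.algebraMap_C, ← RatFunc.algebraMap_eq_C] at this

theorem algE_X {k : Type*} [Field k] :
    algebraMap (RatFunc k) (LaurentSeries k) RatFunc.X =
      algebraMap (PowerSeries k) (LaurentSeries k) PowerSeries.X := by
  have := algE_poly (X : k[X])
  rwa [Polynomial.coe_X, RatFunc.algebraMap_X] at this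

theorem setupE {k : Type*} [Field k] [IsAlgClosed k] (n t s : ℕ) (htn : t + 3 = n) (hs : 0 < s) (ht : 1 < t) (hts : t ∣ s)
    (hn : (n : k) = 0) (h3 : ((3 : ℕ) : k) ≠ 0) (htk : (t : k) ≠ 0) (a : k) (ha : a ≠ 0)
    (TA TB : Finset k) (hA : ∀ b, b ∈ TA ↔ b ^ 3 = a) (hB : ∀ b, b ∈ TB ↔ b ^ t = a) :
    ∃ (Y : TA → PowerSeries k) (V : TB → LaurentSeries k),
      (∀ b, PowerSeries.constantCoeff (Y b) = b) ∧
      (∀ b, (algebraMap _ (LaurentSeries k) (Y b)) ^ n -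
          algebraMap (RatFunc k) (LaurentSeries k) (algebraMap k _ a) * (algebraMap _ (LaurentSeries k) (Y b)) ^ t +
          algebraMap (RatFunc k) (LaurentSeries k) (RatFunc.X ^ s) = 0) ∧
      (∀ b, V b ^ n -
          algebraMap (RatFunc k) (LaurentSeries k) (algebraMap k _ a) * V b ^ t +
          algebraMap (RatFunc k) (LaurentSeries k) (RatFunc.X ^ s) = 0) ∧
      Function.Injective (Sum.elim (fun b => algebraMap _ (LaurentSeries k) (Y b)) V) ∧
      ∀ l θ : k, θ ≠ 0 → l ^ 3 = 1 → (l * θ) ^ t = 1 →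
        ∃ (Φ : LaurentSeries k ≃+* LaurentSeries k) (φ : RatFunc k ≃+* RatFunc k),
          (∀ x, Φ (algebraMap (RatFunc k) (LaurentSeries k) x) = algebraMap (RatFunc k) (LaurentSeries k) (φ x)) ∧
          (∀ b b' : TA, (b' : k) = l * b → algebraMap _ (LaurentSeries k) (Y b') =
            algebraMap (RatFunc k) (LaurentSeries k) (algebraMap k _ l) * Φ (algebraMap _ (LaurentSeries k) (Y b))) ∧
          (∀ b b' : TB, l * θ * b' = b → V b' =
            algebraMap (RatFunc k) (LaurentSeries k) (algebraMap k _ l) * Φ (V b)) := by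
  obtain ⟨m, rfl⟩ := hts
  have hm : 0 < m := Nat.pos_of_mul_pos_left hs
  have hbA : ∀ b : TA, (b : k) ≠ 0 := by
    rintro ⟨b, hb⟩ h
    rw [hA] at hb
    simp only at h
    rw [h] at hb
    exact ha (by rw [← hb]; simp)
  have hbB : ∀ b : TB, (b : k) ≠ 0 := by
    rintro ⟨b, hb⟩ h
    rw [hB] at hb
    simp only at h
    rw [h, zero_pow (by omega)] at hb
    exact ha hb.symm
  have hY : ∀ b : TA, _ := fun b => hens n t 3 m htn htk (by omega) (by omega) hm hn a b (hbA b) ((hA b).1 b.2)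
  have hU : ∀ b : TB, _ := fun b => hens n 3 t m (by omega) h3 (by omega) (by omega) hm hn a b (hbB b) ((hB b).1 b.2)
  choose Y hY hYc using hY
  choose U hU hUc using hU
  set ψ := algebraMap (PowerSeries k) (LaurentSeries k) with hψ
  have hinj : Function.Injective ψ := IsFractionRing.injective _ _
  have hw0 : ψ (PowerSeries.X ^ m) ≠ 0 := by
    rw [Ne, map_eq_zero_iff _ hinj]; exact pow_ne_zero _ PowerSeries.X_ne_zero
  have hU0 : ∀ b, ψ (U b) ≠ 0 := by
    intro b
    rw [Ne, map_eq_zero_iff _ hinj]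
    intro h
    apply hbB b
    rw [← hUc b, h]; simp
  refine ⟨Y, fun b => ψ (PowerSeries.X ^ m) / ψ (U b), hYc, ?_, ?_, ?_, ?_⟩
  · intro b
    rw [algE_C, map_pow, algE_X, ← map_pow, ← hψ, ← map_pow, ← map_pow, ← map_mul, ← map_sub, ← map_add, mul_comm t m, pow_mul, hY b, map_zero]
  · intro b
    show (ψ (PowerSeries.X ^ m) / ψ (U b)) ^ n - _ * (ψ (PowerSeries.X ^ m) / ψ (U b)) ^ t + _ = 0
    have h := congrArg ψ (hU b)
    rw [map_add, map_sub, map_mul, map_pow, map_pow, map_pow, map_zero] at h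
    rw [algE_C, map_pow (algebraMap (RatFunc k) (LaurentSeries k)), algE_X, ← hψ, mul_comm t m, pow_mul, ← map_pow ψ]
    have := hU0 b
    subst htn
    generalize ψ (PowerSeries.X ^ m) = W at *
    generalize ψ (U b) = u at *
    rw [div_pow, div_pow]
    field_simp
    rw [pow_add] at *
    linear_combination (W ^ t * u ^ t) * h
  · rintro (b | b) (b' | b') h
    · simp only [Sum.elim_inl] at h
      have := hinj h
      congr 1
      apply Subtype.ext
      rw [← hYc, ← hYc, this]
    · simp only [Sum.elim_inl, Sum.elim_inr] at h
      rw [eq_div_iff (hU0 _), ← map_mul] at h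
      have := congrArg PowerSeries.constantCoeff (hinj h)
      rw [map_mul, hYc, hUc] at this
      simp [hm.ne', hbA, hbB] at this
    · simp only [Sum.elim_inl, Sum.elim_inr] at h
      rw [eq_comm, eq_div_iff (hU0 _), ← map_mul] at h
      have := congrArg PowerSeries.constantCoeff (hinj h)
      rw [map_mul, hYc, hUc] at this
      simp [hm.ne', hbA, hbB] at this
    · simp only [Sum.elim_inr] at h
      rw [div_eq_div_iff (hU0 _) (hU0 _)] at h
      have := hinj (mul_left_cancel₀ hw0 h)
      congr 1
      apply Subtype.ext
      rw [← hUc, ← hUc, this]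
  · intro l θ hθ hl hlθ
    obtain ⟨η, hη⟩ := IsAlgClosed.exists_pow_nat_eq θ hm
    have hη0 : η ≠ 0 := by
      rintro rfl
      rw [zero_pow hm.ne'] at hη
      exact hθ hη.symm
    have hl0 : l ≠ 0 := by rintro rfl; simp at hl
    obtain ⟨Φ, φ, h1, h2⟩ := scaleE η hη0
    refine ⟨Φ, φ, h1, ?_, ?_⟩
    · intro b b' hb
      rw [algE_C, h2, ← map_mul]
      congr 1
      exact sscale n t 3 m htn htk hn a b b' η l (hbA b') ((hA b').1 b'.2) hb hl (by rw [hη, hlθ]) _ _ (hY b) (hY b') (hYc b) (hYc b')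
    · intro b b' hb
      have e := sscale n 3 t m (by omega) h3 hn a b b' η (l * θ)⁻¹ (hbB b') ((hB b').1 b'.2) (by
        rw [← hb]; field_simp) (by rw [inv_pow, hlθ, inv_one]) (by
        rw [hη]; rw [mul_inv, mul_assoc, inv_mul_cancel₀ hθ, mul_one, inv_pow, hl, inv_one]) _ _ (hU b) (hU b') (hUc b) (hUc b')
      show ψ (PowerSeries.X ^ m) / ψ (U b') = _ * Φ (ψ (PowerSeries.X ^ m) / ψ (U b))
      have hr : PowerSeries.rescale η (PowerSeries.X ^ m) = PowerSeries.C θ * PowerSeries.X ^ m := by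
        rw [map_pow, PowerSeries.rescale_X, mul_pow, ← map_pow, hη]
      rw [algE_C, map_div₀, h2, h2, e, hr, map_mul, map_mul]
      rw [← hψ]
      have hc : ψ (PowerSeries.C (l * θ)⁻¹) = (ψ (PowerSeries.C l) * ψ (PowerSeries.C θ))⁻¹ := by
        apply eq_inv_of_mul_eq_one_left
        rw [← map_mul, ← map_mul, ← map_mul, ← map_mul, inv_mul_cancel₀ (mul_ne_zero hl0 hθ)]
        simp
      rw [hc, inv_mul_eq_div, div_div_eq_mul_div]
      ring

theorem toNodal {K E : Type*} [Field K] [Field E] [Algebra K E] (f : K[X]) {J : Type*} [Fintype J]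
    (hf : f.Monic) (hfd : f.natDegree = Fintype.card J) (r : J → E) (hr : Function.Injective r)
    (hroot : ∀ c, aeval (r c) f = 0) : f.map (algebraMap K E) = Lagrange.nodal Finset.univ r := by
  have hm := hf.map (algebraMap K E)
  have hd : (f.map (algebraMap K E)).degree = (Fintype.card J : ℕ) := by
    rw [hf.degree_map, degree_eq_natDegree hf.ne_zero, hfd]
  refine Polynomial.eq_of_degree_le_of_eval_index_eq (s := Finset.univ) (v := r) hr.injOn ?_ ?_ ?_ ?_
  · rw [hd]; rfl
  · rw [hd, Lagrange.degree_nodal]; rfl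
  · rw [hm.leadingCoeff, (Lagrange.nodal_monic).leadingCoeff]
  · intro i hi
    rw [Lagrange.eval_nodal_at_node hi, eval_map_algebraMap, hroot]

theorem genEquiv {K E : Type*} [Field K] [Field E] [Algebra K E] (f : K[X]) {J : Type*} [Fintype J]
    (hf : f.Monic) (hfd : f.natDegree = Fintype.card J) (r : J → E) (hr : Function.Injective r)
    (hroot : ∀ c, aeval (r c) f = 0) :
    ∃ (ι : f.SplittingField →ₐ[K] E) (e : J ≃ f.rootSet f.SplittingField), ∀ c, ι (e c) = r c := by
  have hnod := toNodal f hf hfd r hr hroot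
  have hsp : (f.map (algebraMap K E)).Splits := by
    rw [hnod]
    exact Splits.prod fun i _ => Splits.X_sub_C _
  let ι := SplittingField.lift f hsp
  have him := Splits.image_rootSet (SplittingField.splits f) ι
  have : ∀ c, ∃ x : f.rootSet f.SplittingField, ι x = r c := by
    intro c
    have : r c ∈ f.rootSet E := (mem_rootSet_of_ne hf.ne_zero).2 (hroot c)
    rw [← him] at this
    obtain ⟨x, hx, hxe⟩ := this
    exact ⟨⟨x, hx⟩, hxe⟩
  choose e he using this
  have hei : Function.Injective e := by
    intro c c' h
    apply hr
    rw [← he, ← he, h]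
  have hb := hei.bijective_of_nat_card_le (by
    rw [Nat.card_coe_set_eq, Nat.card_eq_fintype_card, ← hfd]
    exact ncard_rootSet_le _ _)
  exact ⟨ι, Equiv.ofBijective e hb, he⟩

theorem cardRoots {k : Type*} [Field k] [IsAlgClosed k] (j : ℕ) (hj : (j : k) ≠ 0) (a : k) (ha : a ≠ 0) :
    ∃ T : Finset k, T.card = j ∧ ∀ b, b ∈ T ↔ b ^ j = a := by
  have hj0 : 0 < j := Nat.pos_of_ne_zero (by rintro rfl; simp at hj)
  refine ⟨(X ^ j - C a).roots.toFinset, ?_, ?_⟩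
  · rw [Multiset.toFinset_card_of_nodup (nodup_roots (separable_X_pow_sub_C a hj ha)),
      splits_iff_card_roots.1 (IsAlgClosed.splits _), natDegree_X_pow_sub_C]
  · intro b
    rw [Multiset.mem_toFinset, mem_roots (X_pow_sub_C_ne_zero hj0 a)]
    simp [sub_eq_zero]

theorem mulPerm {k : Type*} [Field k] (j : ℕ) (a μ : k) (hμ0 : μ ≠ 0) (hμ : μ ^ j = 1) (T : Finset k)
    (hT : ∀ b, b ∈ T ↔ b ^ j = a) : ∃ σ : Equiv.Perm T, ∀ b, (σ b : k) = μ * b := by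
  let g : T → T := fun b => ⟨μ * b, by rw [hT, mul_pow, hμ, one_mul, ← hT]; exact b.2⟩
  have hg : Function.Injective g := by
    intro b b' h
    have := congrArg Subtype.val h
    exact Subtype.ext (mul_left_cancel₀ hμ0 this)
  exact ⟨Equiv.ofBijective g (Finite.injective_iff_bijective.1 hg), fun b => rfl⟩

/-- Abhyankar: over an algebraically closed field `k` of odd characteristic
`p ∉ {11, 23}`, for positive integers `n, s, t` with `gcd(n,t) = 1`, `p ∣ n`,
`t ∣ s` and `1 < t = n - 3`, the polynomial `Y^n - a·Y^t + X^s` over `k(X)`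
has `n` distinct roots in its splitting field, and the image of its Galois
group in the permutation group of the set of roots is exactly the alternating
group on those roots. -/
theorem stmt_7 (p : ℕ) (hp : p.Prime) (hodd : Odd p) (h11 : p ≠ 11) (h23 : p ≠ 23)
    (k : Type*) [Field k] [IsAlgClosed k] [CharP k p]
    (n s t : ℕ) (hn : 0 < n) (hs : 0 < s) (ht1 : 1 < t)
    (hco : Nat.gcd n t = 1) (hpn : p ∣ n) (hts : t ∣ s) (htn : t + 3 = n)
    (a : k) (ha : a ≠ 0)
    (f : Polynomial (RatFunc k))
    (hf : f = X ^ n - C (algebraMap k (RatFunc k) a) * X ^ t + C (RatFunc.X ^ s)) :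
    haveI : Fact ((f.map (algebraMap (RatFunc k) f.SplittingField)).Splits) :=
      ⟨SplittingField.splits f⟩
    Fintype.card (f.rootSet f.SplittingField) = n ∧
      (Polynomial.Gal.galActionHom f f.SplittingField).range =
        alternatingGroup (f.rootSet f.SplittingField) := by
  haveI hFact : Fact ((f.map (algebraMap (RatFunc k) f.SplittingField)).Splits) :=
    ⟨SplittingField.splits f⟩
  have hnk : (n : k) = 0 := (CharP.cast_eq_zero_iff k p n).2 hpn
  have hpt : ¬ p ∣ t := fun h => hp.one_lt.ne' (Nat.dvd_one.1 (hco ▸ Nat.dvd_gcd hpn h))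
  have h3n : ¬ 3 ∣ n := by
    intro h
    have h3t : 3 ∣ t := by omega
    have := Nat.dvd_gcd h h3t
    rw [hco] at this
    omega
  have hp3 : ¬ p ∣ 3 := by
    intro h
    have := (Nat.prime_dvd_prime_iff_eq hp Nat.prime_three).1 h
    subst this
    exact h3n hpn
  have hp2 : ¬ p ∣ 2 := by
    intro h
    have := (Nat.prime_dvd_prime_iff_eq hp Nat.prime_two).1 h
    subst this
    exact absurd hodd (by decide)
  have htk : (t : k) ≠ 0 := fun h => hpt ((CharP.cast_eq_zero_iff k p t).1 h)
  have h3k : ((3 : ℕ) : k) ≠ 0 := fun h => hp3 ((CharP.cast_eq_zero_iff k p 3).1 h)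
  have h2k : ((2 : ℕ) : k) ≠ 0 := fun h => hp2 ((CharP.cast_eq_zero_iff k p 2).1 h)
  obtain ⟨TA, hTAc, hA⟩ := cardRoots 3 h3k a ha
  obtain ⟨TB, hTBc, hB⟩ := cardRoots t htk a ha
  obtain ⟨Y, V, hYc, hY, hV, hinj, hsym⟩ := setupE n t s htn hs ht1 hts hnk h3k htk a ha TA TB hA hB
  have hbA : ∀ b : TA, (b : k) ≠ 0 := by
    rintro ⟨b, hb⟩ h
    rw [hA] at hb
    simp only at h
    rw [h] at hb
    exact ha (by rw [← hb]; simp)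
  have hbB : ∀ b : TB, (b : k) ≠ 0 := by
    rintro ⟨b, hb⟩ h
    rw [hB] at hb
    simp only at h
    rw [h, zero_pow (by omega)] at hb
    exact ha hb.symm
  have hcJ : Fintype.card (TA ⊕ TB) = n := by
    rw [Fintype.card_sum, Fintype.card_coe, Fintype.card_coe, hTAc, hTBc]; omega
  have hf' : f = X ^ n + (- C (algebraMap k (RatFunc k) a) * X ^ t + C (RatFunc.X ^ s)) := by rw [hf]; ring
  have hlow : (- C (algebraMap k (RatFunc k) a) * X ^ t + C (RatFunc.X ^ s)).degree < (n : WithBot ℕ) := by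
    refine lt_of_le_of_lt (b := (t : WithBot ℕ)) ?_ (by exact_mod_cast (by omega))
    rw [← C_neg]
    compute_degree
    exact le_refl _
  have hfm : f.Monic := by
    rw [hf']
    exact monic_X_pow_add hlow
  have hfd : f.natDegree = n := by
    rw [hf']
    apply natDegree_eq_of_degree_eq_some
    rw [degree_add_eq_left_of_degree_lt (by rw [degree_X_pow]; exact hlow), degree_X_pow]
  have hae : ∀ {M : Type _} [Field M] [Algebra (RatFunc k) M] (x : M), aeval x f =
      x ^ n - algebraMap (RatFunc k) M (algebraMap k _ a) * x ^ t + algebraMap (RatFunc k) M (RatFunc.X ^ s) := by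
    intro M _ _ x
    rw [hf, map_add, map_sub, map_mul, aeval_C, aeval_C, map_pow, map_pow, aeval_X]
  obtain ⟨ι, e, hιe⟩ := genEquiv f hfm (hfd.trans hcJ.symm) _ hinj (by
    rintro (b | b)
    · rw [hae]; exact hY b
    · rw [hae]; exact hV b)
  have hιA : ∀ b, ι (e (Sum.inl b)) = algebraMap _ (LaurentSeries k) (Y b) := fun b => hιe (Sum.inl b)
  have hιB : ∀ b, ι (e (Sum.inr b)) = V b := fun b => hιe (Sum.inr b)
  have hιinj : Function.Injective ι := ι.toRingHom.injective
  have hcard : Fintype.card (f.rootSet f.SplittingField) = n := by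
    rw [← hcJ]; exact (Fintype.card_congr e).symm
  refine ⟨hcard, ?_⟩
  have hroot : ∀ y : f.rootSet f.SplittingField, aeval (y : f.SplittingField) f = 0 :=
    fun y => aeval_eq_zero_of_mem_rootSet y.2
  have hnod : f.map (algebraMap (RatFunc k) f.SplittingField) =
      Lagrange.nodal Finset.univ (fun c => (e c : f.SplittingField)) :=
    toNodal f hfm (hfd.trans hcJ.symm) _ (Subtype.val_injective.comp e.injective) (fun c => hroot _)
  have hfc : f.coeff 0 = RatFunc.X ^ s := by
    rw [coeff_zero_eq_eval_zero, hf]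
    simp [show n ≠ 0 by omega, show t ≠ 0 by omega]
  have hsep : f.Separable := by
    rw [← separable_map (algebraMap (RatFunc k) f.SplittingField), hnod]
    exact separable_prod_X_sub_C_iff.2 (Subtype.val_injective.comp e.injective)
  haveI : IsGalois (RatFunc k) f.SplittingField := IsGalois.of_separable_splitting_field hsep
  set G := (Polynomial.Gal.galActionHom f f.SplittingField).range with hG
  have hnorm : ∀ l θ : k, θ ≠ 0 → l ^ 3 = 1 → (l * θ) ^ t = 1 →
      ∃ π ∈ Subgroup.normalizer (G : Set (Equiv.Perm (f.rootSet f.SplittingField))),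
        (∀ b : TA, ∃ b' : TA, (b' : k) = l * b ∧ π (e (Sum.inl b)) = e (Sum.inl b')) ∧
        (∀ b : TB, ∃ b' : TB, l * θ * (b' : k) = b ∧ π (e (Sum.inr b)) = e (Sum.inr b')) := by
    intro l θ hθ hl hlθ
    have hl0 : l ≠ 0 := by rintro rfl; simp at hl
    obtain ⟨Φ, φ, hφ, hΦA, hΦB⟩ := hsym l θ hθ hl hlθ
    obtain ⟨σA, hσA⟩ := mulPerm 3 a l hl0 hl TA hA
    obtain ⟨σB, hσB⟩ := mulPerm t a (l * θ)⁻¹ (inv_ne_zero (mul_ne_zero hl0 hθ)) (by rw [inv_pow, hlθ, inv_one]) TB hB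
    have hσB' : ∀ b, l * θ * (σB b : k) = b := by
      intro b; rw [hσB, mul_inv_cancel_left₀ (mul_ne_zero hl0 hθ)]
    let π := e.permCongr (Equiv.sumCongr σA σB)
    have hπA : ∀ b, π (e (Sum.inl b)) = e (Sum.inl (σA b)) := by
      intro b; simp [π, Equiv.permCongr_apply]
    have hπB : ∀ b, π (e (Sum.inr b)) = e (Sum.inr (σB b)) := by
      intro b; simp [π, Equiv.permCongr_apply]
    refine ⟨π, ?_, fun b => ⟨σA b, hσA b, hπA b⟩, fun b => ⟨σB b, hσB' b, hπB b⟩⟩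
    rw [← inv_mem_iff]
    apply Subgroup.mem_normalizer_fintype
    intro g hg
    rw [inv_inv]
    refine conjMem f ι Φ φ hφ (algebraMap k _ l) ?_ π ?_ g hg
    · simpa using hl0
    · intro y
      obtain ⟨c, rfl⟩ := e.surjective y
      rcases c with b | b
      · rw [hπA, hιA, hιA]
        exact hΦA b (σA b) (hσA b)
      · rw [hπB, hιB, hιB]
        exact hΦB b (σB b) (hσB' b)
  let S : Finset (f.rootSet f.SplittingField) := Finset.univ.image (fun b => e (Sum.inl b))
  have hSinj : Function.Injective (fun b : TA => e (Sum.inl b)) := e.injective.comp Sum.inl_injective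
  have hSA : ∀ b, e (Sum.inl b) ∈ S := fun b => Finset.mem_image_of_mem _ (Finset.mem_univ _)
  have hSB : ∀ b, e (Sum.inr b) ∉ S := by
    intro b h
    obtain ⟨b', -, h⟩ := Finset.mem_image.1 h
    exact absurd (e.injective h) (by simp)
  have hScard : S.card = 3 := by
    rw [Finset.card_image_of_injective _ hSinj, Finset.card_univ, Fintype.card_coe, hTAc]
  have halt : G ≤ alternatingGroup (f.rootSet f.SplittingField) := by
    intro g hg
    obtain ⟨σ, hσ⟩ := (memRange f g).1 hg
    rw [Equiv.Perm.mem_alternatingGroup]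
    let i0 : Fin n ≃ (TA ⊕ TB) := (Fintype.equivFinOfCardEq hcJ).symm
    let E0 : Fin n ≃ f.rootSet f.SplittingField := i0.trans e
    have hsgn := Equiv.Perm.sign_permCongr E0.symm g
    rw [← hsgn]
    obtain ⟨I0, hI0⟩ := IsAlgClosed.exists_pow_nat_eq (-1 : k) (n := 2) (by omega)
    let κ0 : k := -(a * t) * (-1) ^ (t - 1)
    obtain ⟨δ, hδ⟩ := IsAlgClosed.exists_pow_nat_eq (κ0 ^ n) (n := 2) (by omega)
    have hev : Even (s * (t - 1)) := by
      obtain ⟨m, rfl⟩ := hts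
      rw [mul_right_comm]
      exact (Nat.even_mul_pred_self t).mul_right m
    obtain ⟨r, hr⟩ := hev
    refine parity (K := RatFunc k) ?_ f (m := t - 1) (fun i => (E0 i : f.SplittingField))
      (Subtype.val_injective.comp E0.injective) ?_ (algebraMap k _ κ0) (algebraMap k _ δ * RatFunc.X ^ r) (algebraMap k _ I0) ?_ ?_ ?_
      (σ : f.SplittingField →ₐ[RatFunc k] f.SplittingField) _ ?_
    · have : algebraMap k (RatFunc k) ((2 : ℕ) : k) ≠ 0 := by
        rw [Ne, map_eq_zero]; exact h2k
      rw [map_natCast] at this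
      exact_mod_cast this
    · exact toNodal f hfm (hfd.trans (Fintype.card_fin n).symm) _ (Subtype.val_injective.comp E0.injective) (fun c => hroot _)
    · rw [← map_pow, hI0, map_neg, map_one]
    · intro i
      have hnK : (n : f.SplittingField) = 0 := by
        have := congrArg (fun x => algebraMap (RatFunc k) f.SplittingField (algebraMap k _ x)) hnk
        simpa using this
      generalize (E0 i : f.SplittingField) = x
      have hdf : eval x (derivative (f.map (algebraMap (RatFunc k) f.SplittingField))) =
          n * x ^ (n - 1) - algebraMap (RatFunc k) f.SplittingField (algebraMap k _ a) * (t * x ^ (t - 1)) := by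
        have hfmap : f.map (algebraMap (RatFunc k) f.SplittingField) = X ^ n -
            C (algebraMap (RatFunc k) f.SplittingField (algebraMap k _ a)) * X ^ t +
            C (algebraMap (RatFunc k) f.SplittingField (RatFunc.X ^ s)) := by
          conv_lhs => rw [congrArg (Polynomial.map (algebraMap (RatFunc k) f.SplittingField)) hf]
          rw [Polynomial.map_add, Polynomial.map_sub, Polynomial.map_mul, map_C, map_C, Polynomial.map_pow, Polynomial.map_pow, map_X]
        rw [hfmap]
        simp only [derivative_add, derivative_sub, derivative_C_mul, derivative_X_pow, derivative_C, eval_add, eval_sub, eval_mul, eval_C, eval_pow, eval_X, eval_zero, map_natCast, eval_natCast]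
        ring
      rw [hdf, hnK, zero_sub, neg_pow]
      have hsg : ((-1 : f.SplittingField) ^ (t - 1)) * (-1) ^ (t - 1) = 1 := by
        rw [← mul_pow]; simp
      simp only [κ0, map_mul, map_neg, map_pow, map_one, map_natCast]
      linear_combination (algebraMap (RatFunc k) f.SplittingField (algebraMap k _ a) * (t * x ^ (t - 1))) * hsg
    · rw [hfc, mul_pow, ← map_pow, ← map_pow, hδ, ← pow_mul, hr, ← pow_mul]
      congr 2
      omega
    · intro i
      have := hσ (E0 i)
      simp only [Equiv.permCongr_apply, Equiv.symm_symm, Equiv.apply_symm_apply]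
      exact this.symm
  have hm : ∃ g ∈ G, ∃ x ∈ S, g x ∉ S := by
    by_contra hcon
    push Not at hcon
    have hPfix : ∀ σ : Gal(f.SplittingField/RatFunc k), σ (∏ x ∈ S, (x : f.SplittingField)) = ∏ x ∈ S, (x : f.SplittingField) := by
      intro σ
      let g := Polynomial.Gal.galActionHom f f.SplittingField (Polynomial.Gal.restrict f f.SplittingField σ)
      have hg : g ∈ G := ⟨_, rfl⟩
      have hgσ : ∀ x, (g x : f.SplittingField) = σ x := fun y => Polynomial.Gal.galActionHom_restrict f f.SplittingField σ y
      have him : S.image g = S := by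
        apply Finset.eq_of_subset_of_card_le
        · intro x hx
          obtain ⟨y, hy, rfl⟩ := Finset.mem_image.1 hx
          exact hcon g hg y hy
        · rw [Finset.card_image_of_injective _ g.injective]
      rw [map_prod]
      conv_rhs => rw [← him]
      rw [Finset.prod_image (fun x _ y _ h => g.injective h)]
      exact Finset.prod_congr rfl (fun x _ => (hgσ x).symm)
    obtain ⟨P, hP⟩ := (IsGalois.mem_range_algebraMap_iff_fixed _).2 hPfix
    rw [Finset.prod_image (fun x _ y _ h => hSinj h)] at hP
    have hall : (∏ b, (e (Sum.inl b) : f.SplittingField)) * ∏ b, (e (Sum.inr b) : f.SplittingField) =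
        algebraMap (RatFunc k) _ (algebraMap k _ ((-1) ^ n) * RatFunc.X ^ s) := by
      have h1 := congrArg (eval 0) hnod
      rw [Lagrange.eval_nodal, ← coeff_zero_eq_eval_zero, coeff_map, hfc] at h1
      simp only [zero_sub] at h1
      rw [Finset.prod_neg, Finset.card_univ, hcJ, Fintype.prod_sum_type] at h1
      rw [map_mul, h1, ← mul_assoc]
      simp [← mul_pow]
    have hPne : P ≠ 0 := by
      rintro rfl
      rw [← hP, map_zero, zero_mul] at hall
      have := (map_eq_zero _).1 hall.symm
      simp [RatFunc.X_ne_zero] at this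
    haveI : Nonempty TA := by
      rw [← Fintype.card_pos_iff, Fintype.card_coe, hTAc]; omega
    refine nopres n t s htn hs ht1 a (fun b : TA => (e (Sum.inl b) : f.SplittingField)) (fun b : TB => (e (Sum.inr b) : f.SplittingField))
      (fun b => by rw [← hae]; exact hroot _) (fun b => by rw [← hae]; exact hroot _) P ((algebraMap k _ ((-1) ^ n) * RatFunc.X ^ s) / P)
      hP.symm ?_ ((-1) ^ n) ?_ ?_ ?_
    · rw [← hP] at hall
      rw [map_div₀, ← hall, mul_div_cancel_left₀]
      simpa using hPne
    · rw [mul_div_cancel₀ _ hPne]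
    · exact pow_ne_zero _ (by simp)
    · intro q hq
      have h1 := congrArg ι hP
      rw [AlgHom.commutes, map_prod, Finset.prod_congr rfl (fun b _ => hιA b), ← hq, algE_poly, ← map_prod] at h1
      have h2 := IsFractionRing.injective (PowerSeries k) (LaurentSeries k) h1
      have h3 := congrArg PowerSeries.constantCoeff h2
      rw [map_prod, Finset.prod_congr rfl (fun b _ => hYc b)] at h3
      rw [← PowerSeries.coeff_zero_eq_constantCoeff_apply, Polynomial.coeff_coe] at h3
      rw [h3]
      exact Finset.prod_ne_zero_iff.2 fun b _ => hbA b
  obtain ⟨ω, hω, hω1⟩ : ∃ ω : k, ω ^ 3 = 1 ∧ ω ≠ 1 := by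
    obtain ⟨T, hTc, hT⟩ := cardRoots 3 h3k (1 : k) one_ne_zero
    obtain ⟨ω, hω, hω1⟩ := Finset.exists_mem_ne (s := T) (by omega) 1
    exact ⟨ω, (hT ω).1 hω, hω1⟩
  have hω0 : ω ≠ 0 := by rintro rfl; simp at hω
  obtain ⟨τ, hτN, hτA, hτB⟩ := hnorm ω ω⁻¹ (inv_ne_zero hω0) hω (by rw [mul_inv_cancel₀ hω0, one_pow])
  refine grp S hScard (by rw [hcard]; exact h3n) (by rw [hcard]; omega) G halt τ hτN ?_ ?_ hm
  · ext x
    obtain ⟨c, rfl⟩ := e.surjective x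
    rw [Equiv.Perm.mem_support]
    rcases c with b | b
    · refine iff_of_true ?_ (hSA b)
      obtain ⟨b', hb', h⟩ := hτA b
      rw [h]
      intro h'
      have := Sum.inl_injective (e.injective h')
      subst this
      exact hω1 (mul_right_cancel₀ (hbA b') (by rw [← hb', one_mul]))
    · refine iff_of_false ?_ (hSB b)
      obtain ⟨b', hb', h⟩ := hτB b
      rw [h, not_not]
      rw [mul_inv_cancel₀ hω0, one_mul] at hb'
      rw [Subtype.ext hb']
  · intro x x' hx hx'
    obtain ⟨c, rfl⟩ := e.surjective x
    obtain ⟨c', rfl⟩ := e.surjective x'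
    rcases c with b | b
    · exact absurd (hSA b) hx
    rcases c' with b' | b'
    · exact absurd (hSA b') hx'
    obtain ⟨g, hgN, hgA, hgB⟩ := hnorm 1 ((b : k) / b') (div_ne_zero (hbB b) (hbB b')) (one_pow _) (by
      rw [one_mul, div_pow, (hB b).1 b.2, (hB b').1 b'.2, div_self ha])
    refine ⟨g, hgN, ?_, ?_⟩
    · obtain ⟨b'', h1, h2⟩ := hgB b
      rw [h2]
      congr 2
      apply Subtype.ext
      have hb := hbB b
      have hb' := hbB b'
      rw [one_mul, div_mul_eq_mul_div, div_eq_iff hb'] at h1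
      exact mul_left_cancel₀ hb h1
    · intro x hx
      obtain ⟨b, -, rfl⟩ := Finset.mem_image.1 hx
      obtain ⟨b', h1, h2⟩ := hgA b
      rw [h2]
      rw [one_mul] at h1
      rw [Subtype.ext h1]
end
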